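/- arXiv:1103.4740 — 2 statements merged into one kernel-verified Lean document; each statement's English description precedes it below -/
import Mathlib

section
/- Let A be a domain with quotient field L of characteristic 0 which is integrally closed in L and finitely generated over ℤ as a ℤ-algebra, and let K be an extension of L of degree 3. Then every two times monogenic A-order in K is of type I. -/
/-- Two elements `α, β` of the integral closure of `A` in `K` are `A`-equivalent if
`β = u·α + a` for some unit `u ∈ Aˣ` and some `a ∈ A`. -/
def AEquiv (A K : Type*) [CommRing A] [CommRing K] [Algebra A K] (α β : K) : Prop :=
  ∃ (u : Aˣ) (a : A), β = algebraMap A K u * α + algebraMap A K a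

/-- An `A`-order in `K`: a subring `O` of the integral closure `A_K` of `A` in `K`
which contains `A` and has quotient field `K`. -/
def IsAOrder (A K : Type*) [CommRing A] [Field K] [Algebra A K] (O : Subalgebra A K) : Prop :=
  O ≤ integralClosure A K ∧ ∀ x : K, ∃ a ∈ O, ∃ b ∈ O, b ≠ 0 ∧ x = a / b

/-- An `A`-order `O` is `k` times monogenic if there are at least `k` pairwise
`A`-inequivalent elements `α ∈ O` with `A[α] = O`. -/
def TimesMonogenic (A K : Type*) [CommRing A] [CommRing K] [Algebra A K]
    (k : ℕ) (O : Subalgebra A K) : Prop :=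
  ∃ f : Fin k → K, (∀ i j, i ≠ j → ¬ AEquiv A K (f i) (f j)) ∧
    ∀ i, Algebra.adjoin A {f i} = O

/-- An `A`-order `O` in `K` (with `[K:L] ≥ 3`) is of type I if there are `α, β ∈ O` and
a matrix `(a1 a2; a3 a4) ∈ GL(2, L)` such that `K = L(α)`, `O = A[α] = A[β]`,
`β = (a1·α + a2)/(a3·α + a4)` and `a3 ≠ 0`. -/
def IsTypeI (A L K : Type*) [CommRing A] [Field L] [Field K] [Algebra A K] [Algebra L K]
    (O : Subalgebra A K) : Prop :=
  ∃ α β : K, α ∈ O ∧ β ∈ O ∧ ∃ M : Matrix (Fin 2) (Fin 2) L, IsUnit M.det ∧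
    Algebra.adjoin L {α} = ⊤ ∧
    Algebra.adjoin A {α} = O ∧ Algebra.adjoin A {β} = O ∧
    M 1 0 ≠ 0 ∧
    algebraMap L K (M 1 0) * α + algebraMap L K (M 1 1) ≠ 0 ∧
    β = (algebraMap L K (M 0 0) * α + algebraMap L K (M 0 1)) /
        (algebraMap L K (M 1 0) * α + algebraMap L K (M 1 1))

/-!
In a cubic extension `K / L` the four elements `1, α, β, αβ` are linearly dependent over `L`, so any
two elements outside `L` are related by a fractional linear transformation in `GL(2, L)`. If it is
not affine, it exhibits `A[α] = A[β]` as being of type I. If it is affine, say `β = qα + p`, then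
`p, q ∈ A`: since `A` is integrally closed, the remainder of a polynomial in `A[X]` modulo the
minimal polynomial of `α` over `L` again lies in `A[X]`. By symmetry `q⁻¹ ∈ A`, so `α` and `β` are
`A`-equivalent.
-/

section FractionalLinear

variable {L K : Type*} [Field L] [Field K] [Algebra L K]

theorem coeffs_eq_zero_of_affine_eq_zero {α : K} (hα : α ∉ (algebraMap L K).range) {a b : L}
    (h : algebraMap L K a * α + algebraMap L K b = 0) : a = 0 ∧ b = 0 := by
  have ha : a = 0 := by
    by_contra ha
    have ha' : algebraMap L K a ≠ 0 := (map_ne_zero _).2 ha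
    refine hα ⟨-b / a, ?_⟩
    rw [map_div₀, map_neg, div_eq_iff ha']
    linear_combination -h
  subst ha
  simpa using h

theorem exists_bilinear_relation_of_finrank_le_three [FiniteDimensional L K]
    (hd : Module.finrank L K ≤ 3) (α β : K) :
    ∃ a b c d : L, ¬(a = 0 ∧ b = 0 ∧ c = 0 ∧ d = 0) ∧
      algebraMap L K a * (α * β) + algebraMap L K b * α + algebraMap L K c * β +
        algebraMap L K d = 0 := by
  have hdep : ¬LinearIndependent L ![α * β, α, β, 1] := fun hli => by
    have := hli.fintype_card_le_finrank
    rw [Fintype.card_fin] at this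
    omega
  obtain ⟨g, hg, i, hi⟩ := Fintype.not_linearIndependent_iff.1 hdep
  refine ⟨g 0, g 1, g 2, g 3, ?_, ?_⟩
  · rintro ⟨h0, h1, h2, h3⟩
    fin_cases i <;> contradiction
  · simpa [Fin.sum_univ_four, Algebra.smul_def] using hg

theorem exists_fractional_linear_of_finrank_le_three [FiniteDimensional L K]
    (hd : Module.finrank L K ≤ 3) {α β : K} (hα : α ∉ (algebraMap L K).range)
    (hβ : β ∉ (algebraMap L K).range) :
    ∃ M : Matrix (Fin 2) (Fin 2) L, IsUnit M.det ∧
      algebraMap L K (M 1 0) * α + algebraMap L K (M 1 1) ≠ 0 ∧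
      β = (algebraMap L K (M 0 0) * α + algebraMap L K (M 0 1)) /
        (algebraMap L K (M 1 0) * α + algebraMap L K (M 1 1)) := by
  obtain ⟨a, b, c, d, hne, hrel⟩ := exists_bilinear_relation_of_finrank_le_three hd α β
  have hden : algebraMap L K a * α + algebraMap L K c ≠ 0 := fun h => by
    obtain ⟨rfl, rfl⟩ := coeffs_eq_zero_of_affine_eq_zero hα h
    obtain ⟨rfl, rfl⟩ := coeffs_eq_zero_of_affine_eq_zero hα (a := b) (b := d)
      (by simpa using hrel)
    exact hne ⟨rfl, rfl, rfl, rfl⟩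
  have hdet : b * c - a * d ≠ 0 := fun h => by
    have hmap := congrArg (algebraMap L K) h
    simp only [map_sub, map_mul, map_zero] at hmap
    -- If the determinant vanishes, the bilinear relation splits into linear factors.
    have hprod : (algebraMap L K a * β + algebraMap L K b) *
        (algebraMap L K a * α + algebraMap L K c) = 0 := by
      linear_combination algebraMap L K a * hrel + hmap
    obtain ⟨rfl, rfl⟩ := coeffs_eq_zero_of_affine_eq_zero hβ
      ((mul_eq_zero.1 hprod).resolve_right hden)
    obtain ⟨rfl, rfl⟩ := coeffs_eq_zero_of_affine_eq_zero hβ (a := c) (b := d)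
      (by simpa using hrel)
    exact hne ⟨rfl, rfl, rfl, rfl⟩
  refine ⟨!![-b, -d; a, c], ?_, by simpa using hden, ?_⟩
  · rw [isUnit_iff_ne_zero, Matrix.det_fin_two_of]
    intro h
    exact hdet (by linear_combination -h)
  · have hβ_eq : β = (algebraMap L K (-b) * α + algebraMap L K (-d)) /
        (algebraMap L K a * α + algebraMap L K c) := by
      rw [eq_div_iff hden, map_neg, map_neg]
      linear_combination hrel
    simpa using hβ_eq

end FractionalLinear

section IntegrallyClosed

open Polynomial

variable {A L K : Type*} [CommRing A] [IsDomain A] [IsIntegrallyClosed A]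
  [Field L] [Algebra A L] [IsFractionRing A L]
  [Field K] [Algebra L K] [Algebra A K] [IsScalarTower A L K]

theorem mem_lifts_of_aeval_mem_adjoin {α : K} (hα : IsIntegral A α) {g : L[X]}
    (hg : g.degree < (minpoly L α).degree) (h : aeval α g ∈ Algebra.adjoin A {α}) :
    g ∈ lifts (algebraMap A L) := by
  rw [Algebra.adjoin_singleton_eq_range_aeval] at h
  obtain ⟨f, hf : aeval α f = aeval α g⟩ := h
  have hmonic := minpoly.monic hα
  refine (mem_lifts _).2 ⟨f %ₘ minpoly A α, ?_⟩
  rw [map_modByMonic _ hmonic, ← minpoly.isIntegrallyClosed_eq_field_fractions' L hα,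
    ← (modByMonic_eq_self_iff (minpoly.monic hα.tower_top)).2 hg]
  refine modByMonic_eq_of_dvd_sub (minpoly.monic hα.tower_top) (minpoly.dvd L α ?_)
  rw [map_sub, aeval_map_algebraMap, hf, sub_self]

theorem coeffs_mem_range_of_affine_mem_adjoin {α : K} (hα : IsIntegral A α)
    (hαL : α ∉ (algebraMap L K).range) {p q : L}
    (h : algebraMap L K q * α + algebraMap L K p ∈ Algebra.adjoin A {α}) :
    q ∈ Set.range (algebraMap A L) ∧ p ∈ Set.range (algebraMap A L) := by
  have hdeg : (C q * X + C p).degree < (minpoly L α).degree := by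
    have htwo := (minpoly.two_le_natDegree_iff (hα.tower_top (A := L))).2 hαL
    rw [degree_eq_natDegree (minpoly.ne_zero hα.tower_top)]
    exact degree_linear_le.trans_lt (by exact_mod_cast htwo)
  have hlift := (lifts_iff_coeff_lifts _).1
    (mem_lifts_of_aeval_mem_adjoin hα hdeg (by simpa using h))
  exact ⟨by simpa using hlift 1, by simpa using hlift 0⟩

theorem aEquiv_of_affine_of_adjoin_eq {α β : K} (hα : IsIntegral A α)
    (hαL : α ∉ (algebraMap L K).range) {p q : L} (hq : q ≠ 0)
    (hβ : β = algebraMap L K q * α + algebraMap L K p)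
    (h : Algebra.adjoin A {α} = Algebra.adjoin A {β}) : AEquiv A K α β := by
  have hβ_mem : β ∈ Algebra.adjoin A {α} := h ▸ Algebra.self_mem_adjoin_singleton A β
  have hα_mem : α ∈ Algebra.adjoin A {β} := h ▸ Algebra.self_mem_adjoin_singleton A α
  have hα_eq : α = algebraMap L K q⁻¹ * β + algebraMap L K (-(q⁻¹ * p)) := by
    have hq' : algebraMap L K q ≠ 0 := (_root_.map_ne_zero _).2 hq
    rw [hβ, map_neg, map_mul, map_inv₀]
    field_simp
    ring
  have hβ_int : IsIntegral A β := adjoin_le_integralClosure hα hβ_mem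
  have hβL : β ∉ (algebraMap L K).range := fun hmem => hαL <| by
    rw [hα_eq]
    exact add_mem (mul_mem ⟨_, rfl⟩ hmem) ⟨_, rfl⟩
  obtain ⟨⟨u, rfl⟩, ⟨a, rfl⟩⟩ := coeffs_mem_range_of_affine_mem_adjoin hα hαL (hβ ▸ hβ_mem)
  obtain ⟨⟨v, hv⟩, -⟩ := coeffs_mem_range_of_affine_mem_adjoin hβ_int hβL (hα_eq ▸ hα_mem)
  have huv : u * v = 1 := IsFractionRing.injective A L <| by
    rw [map_mul, hv, mul_inv_cancel₀ hq, map_one]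
  refine ⟨Units.mkOfMulEqOne u v huv, a, ?_⟩
  rw [hβ, Units.val_mkOfMulEqOne]
  simp only [IsScalarTower.algebraMap_apply A L K]

end IntegrallyClosed

theorem IsAOrder.adjoin_eq_top {A : Type*} (L : Type*) {K : Type*} [CommRing A] [Field L]
    [Algebra A L] [Field K] [Algebra L K] [Algebra.IsAlgebraic L K] [Algebra A K]
    [IsScalarTower A L K] {s : Set K} (hs : IsAOrder A K (Algebra.adjoin A s)) :
    Algebra.adjoin L s = ⊤ := by
  have hle : Algebra.adjoin A s ≤ (Algebra.adjoin L s).restrictScalars A :=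
    Algebra.adjoin_le Algebra.subset_adjoin
  refine eq_top_iff.2 fun x _ => ?_
  obtain ⟨a, ha, b, hb, -, rfl⟩ := hs.2 x
  rw [div_eq_mul_inv]
  have hb_inv : b⁻¹ ∈ Algebra.adjoin L s :=
    (Algebra.adjoin L s).inv_mem_of_algebraic (x := ⟨b, hle hb⟩)
      (Algebra.IsAlgebraic.isAlgebraic b)
  exact mul_mem (hle ha) hb_inv

theorem notMem_range_algebraMap_of_adjoin_eq_top {L K : Type*} [Field L] [Field K] [Algebra L K]
    (hd : Module.finrank L K ≠ 1) {α : K} (hα : Algebra.adjoin L {α} = ⊤) :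
    α ∉ (algebraMap L K).range := by
  rintro ⟨y, rfl⟩
  refine hd (Subalgebra.bot_eq_top_iff_finrank_eq_one.1 ?_)
  rw [eq_comm, ← hα, eq_bot_iff]
  exact Algebra.adjoin_le (Set.singleton_subset_iff.2 (Subalgebra.algebraMap_mem _ y))

theorem cubic_two_times_monogenic_A_order_is_typeI_general
    (A : Type*) [CommRing A] [IsDomain A] [IsIntegrallyClosed A]
    (L : Type*) [Field L] [Algebra A L] [IsFractionRing A L]
    (K : Type*) [Field K] [Algebra L K]
    [Algebra A K] [IsScalarTower A L K]
    (hd : Module.finrank L K = 3)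
    (O : Subalgebra A K) (hO : IsAOrder A K O) (h2 : TimesMonogenic A K 2 O) :
    IsTypeI A L K O := by
  have : FiniteDimensional L K := .of_finrank_pos (by omega)
  obtain ⟨f, hinequiv, hf⟩ := h2
  have hmem (i : Fin 2) : f i ∈ O := hf i ▸ Algebra.self_mem_adjoin_singleton A (f i)
  have htop (i : Fin 2) : Algebra.adjoin L {f i} = ⊤ :=
    IsAOrder.adjoin_eq_top (A := A) L (by rwa [hf i])
  have hnotMem (i : Fin 2) : f i ∉ (algebraMap L K).range :=
    notMem_range_algebraMap_of_adjoin_eq_top (by omega) (htop i)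
  obtain ⟨M, hdet, hden, hM⟩ :=
    exists_fractional_linear_of_finrank_le_three hd.le (hnotMem 0) (hnotMem 1)
  refine ⟨f 0, f 1, hmem 0, hmem 1, M, hdet, htop 0, hf 0, hf 1, fun hM10 => ?_, hden, hM⟩
  have hdiag : M 0 0 ≠ 0 ∧ M 1 1 ≠ 0 := by
    rwa [isUnit_iff_ne_zero, Matrix.det_fin_two, hM10, mul_zero, sub_zero, mul_ne_zero_iff]
      at hdet
  have h_affine :
      f 1 = algebraMap L K (M 0 0 / M 1 1) * f 0 + algebraMap L K (M 0 1 / M 1 1) := by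
    rw [hM, hM10, map_zero, zero_mul, zero_add, map_div₀, map_div₀]
    ring
  exact hinequiv 0 1 (by decide) (aEquiv_of_affine_of_adjoin_eq (hO.1 (hmem 0)) (hnotMem 0)
    (div_ne_zero hdiag.1 hdiag.2) h_affine ((hf 0).trans (hf 1).symm))

/-- Let `A` be a domain with quotient field `L` of characteristic 0, integrally closed
and finitely generated over ℤ, and let `K` be an extension of `L` of degree 3. Then
every two times monogenic `A`-order in `K` is of type I. -/
theorem cubic_two_times_monogenic_A_order_is_typeI
    (A : Type*) [CommRing A] [IsDomain A] [IsIntegrallyClosed A] [Algebra.FiniteType ℤ A]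
    (L : Type*) [Field L] [CharZero L] [Algebra A L] [IsFractionRing A L]
    (K : Type*) [Field K] [Algebra L K] [FiniteDimensional L K]
    [Algebra A K] [IsScalarTower A L K]
    (hd : Module.finrank L K = 3)
    (O : Subalgebra A K) (hO : IsAOrder A K O) (h2 : TimesMonogenic A K 2 O) :
    IsTypeI A L K O :=
  cubic_two_times_monogenic_A_order_is_typeI_general A L K hd O hO h2
end

section
/- Let A be an integrally closed domain with quotient field L of characteristic 0 which is finitely generated over ℤ as a ℤ-algebra, K a finite extension of L of degree at least 3, and C an L-equivalence class in K. Then the set of β ∈ A_K ∩ C with L(β) = K such that the A-order A[β] is two times monogenic is contained in a union of at most finitely many A-equivalence classes. -/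
/-- Two elements `α, β` of `K` are `L`-equivalent if `β = u·α + a` for some `u ∈ L*`
and `a ∈ L`. -/
def LEquiv (L K : Type*) [Field L] [Field K] [Algebra L K] (α β : K) : Prop :=
  ∃ u a : L, u ≠ 0 ∧ β = algebraMap L K u * α + algebraMap L K a

/-! Let `β` and `α` be inequivalent generators of the same order `A[β] = A[α]`. For embeddings
`σ ≠ τ` of `K`, both `(σα - τα) / (σβ - τβ)` and its inverse are integral. While `β` runs through
a fixed `L`-class the ratios `(σβ - τβ) / (σβ - ρβ)` are constant, so the ratios
`(σα - τα) / (σα - ρα)` are units `x` of one finitely generated ring for which `1 - x` is a unit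
too. There are finitely many of these, and they determine the `L`-class of `α`.

Now let `(β', α')` be another pair with `β = uβ' + a` and `α = vα' + b`. Then `v / u` is a unit of
`A`. Writing `α = f(β)` and `α' = g(β')` with `deg g = n ≥ 2`, comparison of leading coefficients
gives `lc(f) uⁿ = v lc(g)`, so `uⁿ⁻¹` is, up to a unit, `lc(g) / lc(f)`. Up to a fixed factor, `u`
is therefore a divisor of a fixed element of `A`, and an element of a Noetherian normal domain has
only finitely many divisors up to units.

The unit equation `x + y = 1` over a finitely generated domain is reduced to number fields by
specialisation; there Padé approximation to powers of `1 - x` yields a gap principle for the heights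
of solutions, which leaves finitely many of them.
-/

section PolynomialIntegral

open Polynomial

variable {K : Type*} [Field K]

/-- The primitive of a polynomial with zero constant term, as a linear map. In positive
characteristic the coefficients `1 / (n + 1)` with `n + 1 = 0` are read as `0`. -/
noncomputable def polyPrimitive : K[X] →ₗ[K] K[X] :=
  lsum fun n => ((n : K) + 1)⁻¹ • monomial (n + 1)

/-- The definite integral of a polynomial from `a` to `b`, as a linear functional. -/
noncomputable def polyIntegral (a b : K) : K[X] →ₗ[K] K :=
  (leval b - leval a) ∘ₗ polyPrimitive

theorem polyIntegral_add_adjacent (a b c : K) (f : K[X]) :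
    polyIntegral a b f + polyIntegral b c f = polyIntegral a c f := by
  simp [polyIntegral]

theorem polyIntegral_swap (a b : K) (f : K[X]) : polyIntegral a b f = -polyIntegral b a f := by
  simp [polyIntegral]

variable [CharZero K]

theorem derivative_polyPrimitive (f : K[X]) : derivative (polyPrimitive f) = f := by
  induction f using Polynomial.induction_on' with
  | add p q hp hq => rw [map_add, derivative_add, hp, hq]
  | monomial n a =>
    have hn : (n + 1 : K) ≠ 0 := by exact_mod_cast n.succ_ne_zero
    simp [polyPrimitive, lsum_apply, smul_monomial, mul_assoc, mul_comm a, hn]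

theorem polyIntegral_derivative (a b : K) (F : K[X]) :
    polyIntegral a b (derivative F) = F.eval b - F.eval a := by
  have h : derivative (polyPrimitive (derivative F) - F) = 0 := by
    rw [derivative_sub, derivative_polyPrimitive, sub_self]
  obtain ⟨c, hc⟩ := natDegree_eq_zero.1 (derivative_eq_zero.1 h)
  simp [polyIntegral, eq_add_of_sub_eq hc.symm]

theorem polyIntegral_eq_polyIntegral_zero_one (a b : K) (f : K[X]) :
    polyIntegral a b f = (b - a) * polyIntegral 0 1 (f.comp (C a + C (b - a) * X)) := by
  have h : derivative ((polyPrimitive f).comp (C a + C (b - a) * X)) =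
      (b - a) • f.comp (C a + C (b - a) * X) := by
    simp [derivative_comp, derivative_polyPrimitive, smul_eq_C_mul]
  rw [← smul_eq_mul, ← map_smul, ← h, polyIntegral_derivative]
  simp [polyIntegral, eval_comp]

theorem polyIntegral_beta (p m : ℕ) :
    ((p + m + 1).factorial : K) * polyIntegral 0 1 (X ^ p * (X - 1) ^ m) =
      (-1) ^ m * p.factorial * m.factorial := by
  induction m generalizing p with
  | zero =>
    have h : derivative (X ^ (p + 1) : K[X]) = ((p : K) + 1) • (X ^ p * (X - 1) ^ 0) := by
      simp [smul_eq_C_mul]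
    have hint := congrArg (polyIntegral 0 1) h
    simp only [polyIntegral_derivative, map_smul, eval_pow, eval_X, one_pow, smul_eq_mul,
      zero_pow p.succ_ne_zero, sub_zero] at hint
    push_cast [Nat.factorial_succ]
    linear_combination -(p.factorial : K) * hint
  | succ m ih =>
    -- integrate the derivative of `X ^ (p + 1) * (X - 1) ^ (m + 1)`, which vanishes at `0` and `1`
    have h : derivative (X ^ (p + 1) * (X - 1) ^ (m + 1) : K[X]) =
        ((p : K) + 1) • (X ^ p * (X - 1) ^ (m + 1)) +
          ((m : K) + 1) • (X ^ (p + 1) * (X - 1) ^ m) := by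
      simp only [derivative_mul, derivative_pow, derivative_sub, derivative_X,
        derivative_one, smul_eq_C_mul, Nat.add_sub_cancel, Nat.cast_add, Nat.cast_one, C_add, C_1,
        map_natCast]
      ring
    have hint := congrArg (polyIntegral 0 1) h
    simp only [polyIntegral_derivative, map_add, map_smul, smul_eq_mul, eval_mul, eval_pow,
      eval_sub, eval_X, eval_one, sub_self, zero_pow m.succ_ne_zero, zero_pow p.succ_ne_zero,
      mul_zero, zero_mul] at hint
    have hp : (p + 1 : K) ≠ 0 := by exact_mod_cast p.succ_ne_zero
    have ih' := ih (p + 1)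
    rw [show p + 1 + m + 1 = p + (m + 1) + 1 by ring, Nat.factorial_succ p] at ih'
    refine mul_left_cancel₀ hp ?_
    push_cast [Nat.factorial_succ m] at ih' ⊢
    linear_combination -((p + (m + 1) + 1).factorial : K) * hint - ((m : K) + 1) * ih'

theorem X_sub_C_pow_succ_dvd_of_dvd_derivative {F : K[X]} {a : K} {N : ℕ} (ha : F.eval a = 0)
    (h : (X - C a) ^ N ∣ derivative F) : (X - C a) ^ (N + 1) ∣ F := by
  rcases eq_or_ne F 0 with rfl | hF
  · exact dvd_zero _
  have hF' : derivative F ≠ 0 := fun h0 => by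
    obtain ⟨c, rfl⟩ := natDegree_eq_zero.1 (derivative_eq_zero.1 h0)
    exact hF (by simpa using ha)
  have hmult := derivative_rootMultiplicity_of_root (show F.IsRoot a from ha)
  have hle := (le_rootMultiplicity_iff hF').2 h
  have hpos := (rootMultiplicity_pos hF).2 (show F.IsRoot a from ha)
  exact (le_rootMultiplicity_iff hF).1 (by omega)

/-- The primitive of `f * ∏ (X - c) ^ N` vanishing on `s` is divisible by `∏ (X - c) ^ (N + 1)`,
whose degree is too large. -/
theorem eq_zero_of_polyIntegral_mul_prod_pow_eq_zero {s : Finset K} {N : ℕ} {f : K[X]}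
    (hf : f.natDegree + 1 < s.card) {a : K}
    (h : ∀ b ∈ s, polyIntegral a b (f * ∏ c ∈ s, (X - C c) ^ N) = 0) : f = 0 := by
  set g : K[X] := f * ∏ c ∈ s, (X - C c) ^ N
  have hmonic (k : ℕ) : (∏ c ∈ s, (X - C c) ^ k).Monic :=
    monic_prod_of_monic _ _ fun c _ => (monic_X_sub_C c).pow k
  have hdegree (k : ℕ) : (∏ c ∈ s, (X - C c) ^ k).natDegree = s.card * k := by
    rw [natDegree_prod_of_monic _ _ fun c _ => (monic_X_sub_C c).pow k]
    simp
  set F : K[X] := polyPrimitive g - C ((polyPrimitive g).eval a)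
  have hF' : derivative F = g := by simp [F, derivative_polyPrimitive]
  have hdvd : ∏ c ∈ s, (X - C c) ^ (N + 1) ∣ F := by
    refine Finset.prod_dvd_of_coprime (fun c _ d _ hcd =>
      (isCoprime_X_sub_C_of_isUnit_sub (sub_ne_zero.2 hcd).isUnit).pow) fun c hc => ?_
    refine X_sub_C_pow_succ_dvd_of_dvd_derivative ?_ ?_
    · simpa [F, polyIntegral] using h c hc
    · exact hF' ▸ (Finset.dvd_prod_of_mem _ hc).mul_left f
  have hF : F = 0 := by
    by_contra hne
    have hle := natDegree_le_of_dvd hdvd hne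
    have hderiv := natDegree_derivative (p := F)
    have hg : g.natDegree ≤ f.natDegree + s.card * N := hdegree N ▸ natDegree_mul_le
    rw [hdegree, mul_add_one] at hle
    rw [hF'] at hderiv
    omega
  have hg : g = 0 := by rw [← hF', hF, derivative_zero]
  exact (mul_eq_zero.1 hg).resolve_right (hmonic N).ne_zero

end PolynomialIntegral

section PadePolynomial

open Polynomial

/-- The homogeneous Padé polynomial of degree `n`: the integral of `(t - a)^l (t - b)^m (t - c)^n`
from `a` to `b` is, up to a factorial factor and the power `(b - a) ^ (l + m + 1)`, its value at
`x = b - a`, `z = a - c`. -/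
def padePoly {R : Type*} [CommSemiring R] (l m n : ℕ) (x z : R) : R :=
  ∑ j ∈ Finset.range (n + 1),
    (((l + j).choose j * (l + m + n + 1).choose (n - j) : ℕ) : R) * x ^ j * z ^ (n - j)

theorem factorial_mul_choose_eq_padePoly_coeff {l m n j : ℕ} (hj : j ≤ n) :
    (l + m + n + 1).factorial * n.choose j * (l + j).factorial =
      l.factorial * n.factorial * (l + j + m + 1).factorial *
        ((l + j).choose j * (l + m + n + 1).choose (n - j)) := by
  have hn := Nat.choose_mul_factorial_mul_factorial hj
  have hl := Nat.choose_mul_factorial_mul_factorial (Nat.le_add_left j l)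
  have hlmn := Nat.choose_mul_factorial_mul_factorial (show n - j ≤ l + m + n + 1 by omega)
  rw [show l + m + n + 1 - (n - j) = l + j + m + 1 by omega] at hlmn
  rw [Nat.add_sub_cancel] at hl
  rw [← hn, ← hl, ← hlmn]
  ring

variable {K : Type*} [Field K] [CharZero K]

theorem factorial_mul_polyIntegral (l m n : ℕ) (a b c : K) :
    ((l + m + n + 1).factorial : K) *
        polyIntegral a b ((X - C a) ^ l * (X - C b) ^ m * (X - C c) ^ n) =
      (-1) ^ m * (l.factorial * m.factorial * n.factorial) *
        ((b - a) ^ (l + m + 1) * padePoly l m n (b - a) (a - c)) := by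
  have hsubst : ((X - C a) ^ l * (X - C b) ^ m * (X - C c) ^ n).comp (C a + C (b - a) * X) =
      ∑ j ∈ Finset.range (n + 1),
        ((b - a) ^ (l + m + j) * (a - c) ^ (n - j) * n.choose j) • (X ^ (l + j) * (X - 1) ^ m) := by
    have ha : C a + C (b - a) * X - C a = C (b - a) * X := by ring
    have hb : C a + C (b - a) * X - C b = C (b - a) * (X - 1) := by rw [C_sub]; ring
    have hc : C a + C (b - a) * X - C c = C (b - a) * X + C (a - c) := by
      simp only [C_sub]; ring
    simp only [mul_comp, pow_comp, sub_comp, X_comp, C_comp, ha, hb, hc]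
    rw [add_pow, mul_pow _ _ m, Finset.mul_sum]
    refine Finset.sum_congr rfl fun j _ => ?_
    simp only [smul_eq_C_mul, C_mul, C_pow, map_natCast]
    ring
  rw [polyIntegral_eq_polyIntegral_zero_one, hsubst, map_sum, padePoly]
  simp only [Finset.mul_sum, map_smul, smul_eq_mul]
  refine Finset.sum_congr rfl fun j hj => ?_
  have hcoeff : ((l + m + n + 1).factorial * n.choose j * (l + j).factorial : K) =
      l.factorial * n.factorial * (l + j + m + 1).factorial *
        ((l + j).choose j * (l + m + n + 1).choose (n - j) : ℕ) := by
    exact_mod_cast factorial_mul_choose_eq_padePoly_coeff (m := m) (Finset.mem_range_succ_iff.1 hj)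
  refine mul_left_cancel₀ (Nat.cast_ne_zero.2 (l + j + m + 1).factorial_ne_zero : (_ : K) ≠ 0) ?_
  linear_combination ((l + m + n + 1).factorial * n.choose j * (b - a) ^ (l + m + j + 1) *
    (a - c) ^ (n - j) : K) * polyIntegral_beta (K := K) (l + j) m +
    ((-1) ^ m * m.factorial * (b - a) ^ (l + m + j + 1) * (a - c) ^ (n - j)) * hcoeff

end PadePolynomial

section PadeVector

open Polynomial

/-- The diagonal Padé vector of order `N`: a short vector orthogonal to `x ^ (2 * N + 1)` when
`x 0 + x 1 + x 2 = 0`. -/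
def padeVec {R : Type*} [CommSemiring R] (N : ℕ) (x : Fin 3 → R) : Fin 3 → R :=
  fun i => padePoly N N N (x i) (x (i + 2))

/-- The off-diagonal Padé vector of order `N`, coming from the exponents `(N + 1, N, N)`: a second
short vector orthogonal to `x ^ (2 * N + 1)`, independent of `padeVec N x`. -/
def padeVecShift {R : Type*} [CommRing R] (N : ℕ) (x : Fin 3 → R) : Fin 3 → R :=
  ![x 0 * padePoly (N + 1) N N (x 0) (x 2), padePoly N N (N + 1) (x 1) (x 0),
    -(x 2 * padePoly N (N + 1) N (x 2) (x 1))]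

theorem linearIndependent_pair_or_pair {K V : Type*} [Field K] [AddCommGroup V] [Module K V]
    {v w u : V} (hvw : LinearIndependent K ![v, w]) (hu : u ≠ 0) :
    LinearIndependent K ![u, v] ∨ LinearIndependent K ![u, w] := by
  by_contra! h
  simp only [LinearIndependent.pair_iff' hu, not_forall, not_not] at h
  obtain ⟨⟨a, rfl⟩, b, rfl⟩ := h
  have hab := LinearIndependent.pair_iff.1 hvw b (-a) (by module)
  exact hvw.ne_zero 0 (by simpa using Or.inl hab.2)

variable {K : Type*} [Field K] [CharZero K] {x y z : K}

theorem factorial_mul_polyIntegral_triangle (l m n : ℕ) (hxyz : x + y + z = 0) :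
    let f : K[X] := (X - C 0) ^ l * (X - C x) ^ m * (X - C (-z)) ^ n
    let d : K := (l + m + n + 1).factorial
    let e : K := l.factorial * m.factorial * n.factorial
    d * polyIntegral 0 x f = (-1) ^ m * e * (x ^ (l + m + 1) * padePoly l m n x z) ∧
    d * polyIntegral x (-z) f = (-1) ^ n * e * (y ^ (m + n + 1) * padePoly m n l y x) ∧
    d * polyIntegral (-z) 0 f = (-1) ^ l * e * (z ^ (n + l + 1) * padePoly n l m z y) := by
  intro f d e
  have hzx : -z - x = y := by linear_combination -hxyz
  refine ⟨?_, ?_, ?_⟩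
  · simpa [f, d, e] using factorial_mul_polyIntegral l m n 0 x (-z)
  · have hf : f = (X - C x) ^ m * (X - C (-z)) ^ n * (X - C 0) ^ l := by ring
    have hd : l + m + n + 1 = m + n + l + 1 := by ring
    simp only [d, hf, hd, factorial_mul_polyIntegral, hzx, sub_zero]
    ring
  · have hf : f = (X - C (-z)) ^ n * (X - C 0) ^ l * (X - C x) ^ m := by ring
    have hd : l + m + n + 1 = n + l + m + 1 := by ring
    simp only [d, hf, hd, factorial_mul_polyIntegral, hzx, zero_sub, neg_neg]
    ring

theorem padePoly_relation (l m n : ℕ) (hxyz : x + y + z = 0) :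
    (-1) ^ m * (x ^ (l + m + 1) * padePoly l m n x z) +
      (-1) ^ n * (y ^ (m + n + 1) * padePoly m n l y x) +
      (-1) ^ l * (z ^ (n + l + 1) * padePoly n l m z y) = 0 := by
  obtain ⟨hx, hy, hz⟩ := factorial_mul_polyIntegral_triangle l m n hxyz
  have hcycle := polyIntegral_add_adjacent 0 x (-z)
    ((X - C 0) ^ l * (X - C x) ^ m * (X - C (-z)) ^ n)
  rw [polyIntegral_swap 0 (-z)] at hcycle
  have hfact : (l.factorial * m.factorial * n.factorial : K) ≠ 0 := by
    simp [Nat.factorial_ne_zero]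
  refine mul_left_cancel₀ hfact ?_
  linear_combination ((l + m + n + 1).factorial : K) * hcycle - hx - hy - hz

theorem pow_dotProduct_padeVec (N : ℕ) {x : Fin 3 → K} (hx : x 0 + x 1 + x 2 = 0) :
    (x ^ (2 * N + 1)) ⬝ᵥ padeVec N x = 0 := by
  have h := padePoly_relation N N N hx
  rw [← two_mul] at h
  refine mul_left_cancel₀ (pow_ne_zero N (neg_ne_zero.2 one_ne_zero) : (-1 : K) ^ N ≠ 0) ?_
  simp only [padeVec, Matrix.vec3_dotProduct, Pi.pow_apply, Fin.isValue, zero_add,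
    show (1 + 2 : Fin 3) = 0 from rfl, show (2 + 2 : Fin 3) = 1 from rfl]
  linear_combination h

theorem pow_dotProduct_padeVecShift (N : ℕ) {x : Fin 3 → K} (hx : x 0 + x 1 + x 2 = 0) :
    (x ^ (2 * N + 1)) ⬝ᵥ padeVecShift N x = 0 := by
  have h := padePoly_relation (N + 1) N N hx
  rw [show N + 1 + N + 1 = 2 * N + 1 + 1 by ring, ← two_mul,
    show N + (N + 1) + 1 = 2 * N + 1 + 1 by ring] at h
  refine mul_left_cancel₀ (pow_ne_zero N (neg_ne_zero.2 one_ne_zero) : (-1 : K) ^ N ≠ 0) ?_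
  simp only [padeVecShift, Matrix.vec3_dotProduct, Pi.pow_apply, Matrix.cons_val_zero,
    Matrix.cons_val_one, Matrix.cons_val]
  linear_combination h

theorem eq_zero_of_polyIntegral_mul_triple_eq_zero {N : ℕ} {f : K[X]} {a b c : K}
    (hf : f.natDegree ≤ 1) (hab : a ≠ b) (hac : a ≠ c) (hbc : b ≠ c)
    (hb : polyIntegral a b (f * ((X - C a) ^ N * (X - C b) ^ N * (X - C c) ^ N)) = 0)
    (hc : polyIntegral a c (f * ((X - C a) ^ N * (X - C b) ^ N * (X - C c) ^ N)) = 0) :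
    f = 0 := by
  classical
  have ha' : a ∉ ({b, c} : Finset K) := by simp [hab, hac]
  have hb' : b ∉ ({c} : Finset K) := by simp [hbc]
  have hcard : ({a, b, c} : Finset K).card = 3 := by
    rw [Finset.card_insert_of_notMem ha', Finset.card_insert_of_notMem hb', Finset.card_singleton]
  have hprod : ∏ e ∈ {a, b, c}, (X - C e) ^ N =
      (X - C a) ^ N * (X - C b) ^ N * (X - C c) ^ N := by
    rw [Finset.prod_insert ha', Finset.prod_insert hb', Finset.prod_singleton, mul_assoc]
  refine eq_zero_of_polyIntegral_mul_prod_pow_eq_zero (s := {a, b, c}) (N := N) (a := a)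
    (by omega) fun e he => ?_
  rw [hprod]
  simp only [Finset.mem_insert, Finset.mem_singleton] at he
  rcases he with rfl | rfl | rfl
  · simp [polyIntegral]
  · exact hb
  · exact hc

/-- A vanishing combination of the two vectors yields a linear polynomial `f` such that all
integrals of `f * (t (t - x 0) (t + x 2))^N` between the vertices `0`, `x 0`, `-x 2` vanish. -/
theorem linearIndependent_padeVec (N : ℕ) {x : Fin 3 → K} (hsum : x 0 + x 1 + x 2 = 0)
    (hx : ∀ i, x i ≠ 0) : LinearIndependent K ![padeVec N x, padeVecShift N x] := by
  rw [LinearIndependent.pair_iff]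
  intro p q hpq
  have h0 := congrFun hpq 0
  have h2 := congrFun hpq 2
  simp only [padeVec, padeVecShift, Pi.add_apply, Pi.smul_apply, Matrix.cons_val_zero,
    Matrix.cons_val, smul_eq_mul, Pi.zero_apply, zero_add, show (2 + 2 : Fin 3) = 1 from rfl]
    at h0 h2
  obtain ⟨hx₁, -, hz₁⟩ := factorial_mul_polyIntegral_triangle N N N hsum
  obtain ⟨hx₂, -, hz₂⟩ := factorial_mul_polyIntegral_triangle (N + 1) N N hsum
  push_cast [Nat.factorial_succ N] at hx₂ hz₂
  set d : K := ((N + N + N + 1).factorial : K)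
  set d' : K := ((N + 1 + N + N + 1).factorial : K)
  let f : K[X] := C (p * (N + 1) * d) + C (q * d') * X
  have hsplit : f * ((X - C 0) ^ N * (X - C (x 0)) ^ N * (X - C (-x 2)) ^ N) =
      (p * (N + 1) * d) • ((X - C 0) ^ N * (X - C (x 0)) ^ N * (X - C (-x 2)) ^ N) +
        (q * d') • ((X - C 0) ^ (N + 1) * (X - C (x 0)) ^ N * (X - C (-x 2)) ^ N) := by
    simp only [f, smul_eq_C_mul, map_zero, sub_zero]
    ring
  have hf : f = 0 := by
    refine eq_zero_of_polyIntegral_mul_triple_eq_zero (N := N) (a := 0) (b := x 0) (c := -x 2)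
      (by simp only [f]; compute_degree) (hx 0).symm
      (by simpa [eq_comm] using hx 2) (fun h => hx 1 (by linear_combination hsum - h)) ?_ ?_ <;>
    rw [hsplit, map_add, map_smul, map_smul, smul_eq_mul, smul_eq_mul]
    · linear_combination (p * (N + 1)) * hx₁ + q * hx₂ +
        ((N + 1) * (-1) ^ N * N.factorial ^ 3 * x 0 ^ (2 * N + 1) : K) * h0
    · rw [polyIntegral_swap 0, polyIntegral_swap 0]
      linear_combination -(p * (N + 1)) * hz₁ - q * hz₂ -
        ((N + 1) * (-1) ^ N * N.factorial ^ 3 * x 2 ^ (2 * N + 1) : K) * h2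
  have hN : (N + 1 : K) ≠ 0 := by exact_mod_cast N.succ_ne_zero
  have hd : d ≠ 0 := Nat.cast_ne_zero.2 (Nat.factorial_ne_zero _)
  have hd' : d' ≠ 0 := Nat.cast_ne_zero.2 (Nat.factorial_ne_zero _)
  exact ⟨by simpa [f, hN, hd] using congrArg (coeff · 0) hf,
    by simpa [f, coeff_X, hd', coeff_C, coeff_C_mul, -map_mul] using congrArg (coeff · 1) hf⟩

theorem exists_padeVec_linearIndependent (N : ℕ) {x : Fin 3 → K} (hsum : x 0 + x 1 + x 2 = 0)
    (hx : ∀ i, x i ≠ 0) {u : Fin 3 → K} (hu : u ≠ 0) :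
    ∃ w : Fin 3 → K, (w = padeVec N x ∨ w = padeVecShift N x) ∧
      (x ^ (2 * N + 1)) ⬝ᵥ w = 0 ∧ LinearIndependent K ![u, w] := by
  have hpair := linearIndependent_padeVec N hsum hx
  rcases linearIndependent_pair_or_pair hpair hu with h | h
  · exact ⟨padeVec N x, Or.inl rfl, pow_dotProduct_padeVec N hsum, h⟩
  · exact ⟨padeVecShift N x, Or.inr rfl, pow_dotProduct_padeVecShift N hsum, h⟩

end PadeVector

section PadeHeight

open Height Height.AdmissibleAbsValues

variable {K : Type*} [Field K]

theorem abv_padePoly_le (v : AbsoluteValue K ℝ) (l m n : ℕ) {x z : K} {M : ℝ} (hx : v x ≤ M)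
    (hz : v z ≤ M) : v (padePoly l m n x z) ≤ 2 ^ (2 * l + m + 3 * n + 1) * M ^ n := by
  have hM : 0 ≤ M := (v.nonneg x).trans hx
  have hterm : ∀ j ∈ Finset.range (n + 1),
      v ((((l + j).choose j * (l + m + n + 1).choose (n - j) : ℕ) : K) * x ^ j * z ^ (n - j)) ≤
        2 ^ (2 * l + m + 2 * n + 1) * M ^ n := by
    intro j hj
    have hjn : j ≤ n := Finset.mem_range_succ_iff.1 hj
    have hcoeff : (l + j).choose j * (l + m + n + 1).choose (n - j) ≤
        2 ^ (2 * l + m + 2 * n + 1) :=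
      calc (l + j).choose j * (l + m + n + 1).choose (n - j)
          ≤ 2 ^ (l + n) * 2 ^ (l + m + n + 1) :=
            Nat.mul_le_mul ((Nat.choose_le_two_pow _ _).trans
              (Nat.pow_le_pow_right two_pos (by omega))) (Nat.choose_le_two_pow _ _)
        _ = 2 ^ (2 * l + m + 2 * n + 1) := by rw [← pow_add]; congr 1; ring
    have hv := (v.apply_nat_le_self _).trans (Nat.cast_le.2 hcoeff)
    rw [Nat.cast_pow, Nat.cast_ofNat] at hv
    have hMn : M ^ n = M ^ j * M ^ (n - j) := by rw [← pow_add, Nat.add_sub_cancel' hjn]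
    rw [map_mul, map_mul, map_pow, map_pow, hMn, ← mul_assoc]
    gcongr
  have hn : ((n + 1 : ℕ) : ℝ) ≤ 2 ^ n := by exact_mod_cast Nat.lt_two_pow_self (n := n)
  calc v (padePoly l m n x z)
      ≤ ∑ _j ∈ Finset.range (n + 1), 2 ^ (2 * l + m + 2 * n + 1) * M ^ n :=
        (v.sum_le _ _).trans (Finset.sum_le_sum hterm)
    _ = ((n + 1 : ℕ) : ℝ) * 2 ^ (2 * l + m + 2 * n + 1) * M ^ n := by simp [mul_assoc]
    _ ≤ 2 ^ n * 2 ^ (2 * l + m + 2 * n + 1) * M ^ n := by gcongr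
    _ = 2 ^ (2 * l + m + 3 * n + 1) * M ^ n := by ring

theorem nonarch_abv_padePoly_le {v : AbsoluteValue K ℝ} (hv : IsNonarchimedean v) (l m n : ℕ)
    {x z : K} {M : ℝ} (hx : v x ≤ M) (hz : v z ≤ M) : v (padePoly l m n x z) ≤ M ^ n := by
  have hM : 0 ≤ M := (v.nonneg x).trans hx
  refine hv.apply_sum_le.trans (Real.iSup_le (fun ⟨j, hj⟩ => ?_) (pow_nonneg hM n))
  have hjn : j ≤ n := Finset.mem_range_succ_iff.1 hj
  have hcoeff := hv.apply_natCast_le_one (n := (l + j).choose j * (l + m + n + 1).choose (n - j))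
  calc v ((((l + j).choose j * (l + m + n + 1).choose (n - j) : ℕ) : K) * x ^ j * z ^ (n - j))
      ≤ 1 * M ^ j * M ^ (n - j) := by
        rw [map_mul, map_mul, map_pow, map_pow]
        gcongr
    _ = M ^ n := by rw [one_mul, ← pow_add, Nat.add_sub_cancel' hjn]

theorem abv_padeVec_le (v : AbsoluteValue K ℝ) (N : ℕ) {x : Fin 3 → K} {M : ℝ}
    (hx : ∀ i, v (x i) ≤ M) (i : Fin 3) : v (padeVec N x i) ≤ 256 ^ (N + 1) * M ^ N := by
  have hM : 0 ≤ M := (v.nonneg _).trans (hx 0)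
  refine (abv_padePoly_le v N N N (hx _) (hx _)).trans ?_
  gcongr
  rw [show (256 : ℝ) = 2 ^ 8 by norm_num, ← pow_mul]
  exact pow_le_pow_right₀ one_le_two (by omega)

theorem abv_padeVecShift_le (v : AbsoluteValue K ℝ) (N : ℕ) {x : Fin 3 → K} {M : ℝ}
    (hx : ∀ i, v (x i) ≤ M) (i : Fin 3) :
    v (padeVecShift N x i) ≤ 256 ^ (N + 1) * M ^ (N + 1) := by
  have hM : 0 ≤ M := (v.nonneg _).trans (hx 0)
  have hpow {k : ℕ} (hk : k ≤ 8 * (N + 1)) : (2 : ℝ) ^ k ≤ 256 ^ (N + 1) := by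
    rw [show (256 : ℝ) = 2 ^ 8 by norm_num, ← pow_mul]
    exact pow_le_pow_right₀ one_le_two hk
  have hmul {k : ℕ} (hk : k ≤ 8 * (N + 1)) {a b : K} (ha : v a ≤ M) (hb : v b ≤ 2 ^ k * M ^ N) :
      v (a * b) ≤ 256 ^ (N + 1) * M ^ (N + 1) :=
    calc v (a * b) = v a * v b := map_mul v a b
      _ ≤ M * (2 ^ k * M ^ N) := by gcongr
      _ = 2 ^ k * M ^ (N + 1) := by ring
      _ ≤ 256 ^ (N + 1) * M ^ (N + 1) := by gcongr; exact hpow hk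
  fin_cases i
  · exact hmul (by omega) (hx 0) (abv_padePoly_le v (N + 1) N N (hx 0) (hx 2))
  · refine (abv_padePoly_le v N N (N + 1) (hx 1) (hx 0)).trans ?_
    gcongr
    exact hpow (by omega)
  · exact (v.map_neg _).trans_le
      (hmul (by omega) (hx 2) (abv_padePoly_le v N (N + 1) N (hx 2) (hx 1)))

theorem nonarch_abv_padeVecShift_le {v : AbsoluteValue K ℝ} (hv : IsNonarchimedean v) (N : ℕ)
    {x : Fin 3 → K} {M : ℝ} (hx : ∀ i, v (x i) ≤ M) (i : Fin 3) :
    v (padeVecShift N x i) ≤ M ^ (N + 1) := by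
  have hM : 0 ≤ M := (v.nonneg _).trans (hx 0)
  have hmul {a b : K} (ha : v a ≤ M) (hb : v b ≤ M ^ N) : v (a * b) ≤ M ^ (N + 1) := by
    rw [map_mul, pow_succ']
    gcongr
  fin_cases i
  · exact hmul (hx 0) (nonarch_abv_padePoly_le hv (N + 1) N N (hx 0) (hx 2))
  · exact nonarch_abv_padePoly_le hv N N (N + 1) (hx 1) (hx 0)
  · exact (v.map_neg _).trans_le
      (hmul (hx 2) (nonarch_abv_padePoly_le hv N (N + 1) N (hx 2) (hx 1)))

section

variable [AdmissibleAbsValues K] {ι ι' : Type*} [Finite ι] [Finite ι']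

theorem hasFiniteMulSupport_iSup_abv {x : ι → K} (hx : x ≠ 0) :
    (fun v : nonarchAbsVal (K := K) => ⨆ i, v.1 (x i)).HasFiniteMulSupport := by
  refine (Set.finite_iUnion fun i : {i // x i ≠ 0} => hasFiniteMulSupport i.2).subset fun v hv => ?_
  by_contra hone
  simp only [Set.mem_iUnion, Function.mem_mulSupport, not_exists, not_not] at hone
  obtain ⟨i, hi⟩ := Function.ne_iff.1 hx
  have : Nonempty ι := ⟨i⟩
  refine hv (le_antisymm (ciSup_le fun j => ?_)
    ((hone ⟨i, hi⟩).symm.trans_le (Finite.le_ciSup (fun j => v.1 (x j)) i)))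
  rcases eq_or_ne (x j) 0 with hj | hj
  · rw [hj, map_zero]
    exact zero_le_one
  · exact (hone ⟨j, hj⟩).le

theorem mulHeight_le_of_abv_le {x : ι → K} {y : ι' → K} (hx : x ≠ 0) (hy : y ≠ 0) {n : ℕ} {C : ℝ}
    (hC : 0 ≤ C)
    (harch : ∀ v ∈ archAbsVal (K := K), ⨆ j, v (y j) ≤ C * (⨆ i, v (x i)) ^ n)
    (hnonarch : ∀ v ∈ nonarchAbsVal (K := K), ⨆ j, v (y j) ≤ (⨆ i, v (x i)) ^ n) :
    mulHeight y ≤ C ^ totalWeight K * mulHeight x ^ n := by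
  rw [mulHeight_eq hy, mulHeight_eq hx, mul_pow, ← mul_assoc]
  refine mul_le_mul ?_ ?_
    (finprod_nonneg fun v => Real.iSup_nonneg_of_nonnegHomClass v.1 _)
    (mul_nonneg (pow_nonneg hC _) (pow_nonneg (Multiset.prod_map_nonneg fun v _ =>
      Real.iSup_nonneg_of_nonnegHomClass v _) n))
  · rw [← Multiset.prod_map_pow, totalWeight, ← Multiset.prod_replicate, ← Multiset.map_const',
      ← Multiset.prod_map_mul]
    exact Multiset.prod_map_le_prod_map₀ _ _
      (fun v _ => Real.iSup_nonneg_of_nonnegHomClass v _) harch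
  · rw [finprod_pow (hasFiniteMulSupport_iSup_abv hx)]
    exact finprod_le_finprod (hasFiniteMulSupport_iSup_abv hy)
      (fun v => Real.iSup_nonneg_of_nonnegHomClass v.1 _)
      ((hasFiniteMulSupport_iSup_abv hx).pow n) fun v => hnonarch v.1 v.2

end

variable [AdmissibleAbsValues K]

theorem mulHeight_padeVec_le (N : ℕ) {x : Fin 3 → K} (hx : x ≠ 0) :
    mulHeight (padeVec N x) ≤ (256 ^ (N + 1) : ℝ) ^ totalWeight K * mulHeight x ^ (N + 1) := by
  have hone : (1 : ℝ) ≤ (256 ^ (N + 1)) ^ totalWeight K :=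
    one_le_pow₀ (one_le_pow₀ (by norm_num))
  rcases eq_or_ne (padeVec N x) 0 with h0 | h0
  · rw [h0, mulHeight_zero]
    exact one_le_mul_of_one_le_of_one_le hone (one_le_pow₀ (one_le_mulHeight x))
  have hle : mulHeight (padeVec N x) ≤ (256 ^ (N + 1) : ℝ) ^ totalWeight K * mulHeight x ^ N :=
    mulHeight_le_of_abv_le hx h0 (by positivity)
      (fun v _ => ciSup_le fun i => abv_padeVec_le v N (Finite.le_ciSup fun i => v (x i)) i)
      (fun v hv => ciSup_le fun i => nonarch_abv_padePoly_le (isNonarchimedean v hv) N N N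
        (Finite.le_ciSup (fun i => v (x i)) i) (Finite.le_ciSup (fun i => v (x i)) (i + 2)))
  refine hle.trans (mul_le_mul_of_nonneg_left ?_ (by positivity))
  exact pow_le_pow_right₀ (one_le_mulHeight x) N.le_succ

theorem mulHeight_padeVecShift_le (N : ℕ) {x : Fin 3 → K} (hx : x ≠ 0) :
    mulHeight (padeVecShift N x) ≤
      (256 ^ (N + 1) : ℝ) ^ totalWeight K * mulHeight x ^ (N + 1) := by
  have hone : (1 : ℝ) ≤ (256 ^ (N + 1)) ^ totalWeight K :=
    one_le_pow₀ (one_le_pow₀ (by norm_num))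
  rcases eq_or_ne (padeVecShift N x) 0 with h0 | h0
  · rw [h0, mulHeight_zero]
    exact one_le_mul_of_one_le_of_one_le hone (one_le_pow₀ (one_le_mulHeight x))
  exact mulHeight_le_of_abv_le hx h0 (by positivity)
    (fun v _ => ciSup_le fun i => abv_padeVecShift_le v N (Finite.le_ciSup fun i => v (x i)) i)
    (fun v hv => ciSup_le fun i =>
      nonarch_abv_padeVecShift_le (isNonarchimedean v hv) N (Finite.le_ciSup fun i => v (x i)) i)

end PadeHeight

section PadeInequality

open Matrix Height Height.AdmissibleAbsValues

variable (K : Type*) [Field K] [AdmissibleAbsValues K]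

theorem exists_logHeight_crossProduct_le :
    ∃ c : ℝ, 0 ≤ c ∧
      ∀ z w : Fin 3 → K, logHeight (z ⨯₃ w) ≤ c + (logHeight z + logHeight w) := by
  let A : Fin 3 × (Fin 3 × Fin 3) → K := fun t => (Pi.single t.2.1 1 ⨯₃ Pi.single t.2.2 1) t.1
  have hc : 0 ≤ totalWeight K * Real.log (Nat.card (Fin 3 × Fin 3)) + logHeight A :=
    add_nonneg (mul_nonneg (by positivity) (Real.log_natCast_nonneg _)) (logHeight_nonneg _)
  refine ⟨_, hc, fun z w => ?_⟩
  rcases eq_or_ne z 0 with rfl | hz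
  · rw [map_zero, LinearMap.zero_apply, logHeight_zero, zero_add]
    exact add_nonneg hc (logHeight_nonneg w)
  rcases eq_or_ne w 0 with rfl | hw
  · rw [map_zero, logHeight_zero, add_zero]
    exact add_nonneg hc (logHeight_nonneg z)
  have hA : z ⨯₃ w = fun j => ∑ i : Fin 3 × Fin 3, A (j, i) * (z i.1 * w i.2) := by
    funext j
    rw [Fintype.sum_prod_type]
    fin_cases j <;> simp [Fin.sum_univ_three, A, cross_apply] <;> ring
  rw [hA, ← logHeight_fun_mul_eq hz hw]
  exact logHeight_linearMap_apply_le A _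

variable {K} in
theorem logHeight_eq_logHeight_crossProduct {p z w : Fin 3 → K} (hp : p ≠ 0) (hz : p ⬝ᵥ z = 0)
    (hw : p ⬝ᵥ w = 0) (hzw : LinearIndependent K ![z, w]) :
    logHeight p = logHeight (z ⨯₃ w) := by
  have hcross : (z ⨯₃ w) ⨯₃ p = 0 := by
    rw [cross_cross_eq_smul_sub_smul, dotProduct_comm z, dotProduct_comm w, hz, hw, zero_smul,
      zero_smul, sub_zero]
  have hdep := mt crossProduct_ne_zero_iff_linearIndependent.2 (not_not.2 hcross)
  rw [LinearIndependent.pair_iff' (crossProduct_ne_zero_iff_linearIndependent.2 hzw)] at hdep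
  push Not at hdep
  obtain ⟨c, rfl⟩ := hdep
  exact logHeight_smul_eq_logHeight _ (left_ne_zero_of_smul hp)

theorem exists_mul_logHeight_le_logHeight_div_pow [CharZero K] :
    ∃ c : ℝ, 0 ≤ c ∧ ∀ (N : ℕ) (x y : Fin 3 → K), x 0 + x 1 + x 2 = 0 → y 0 + y 1 + y 2 = 0 →
      (∀ i, x i ≠ 0) → y ≠ 0 →
      N * logHeight x ≤ logHeight (y / x ^ (2 * N + 1)) + c * (N + 1) := by
  obtain ⟨c₀, hc₀, hcross⟩ := exists_logHeight_crossProduct_le K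
  set c₁ := totalWeight K * Real.log 256
  have hc₁ : 0 ≤ c₁ := mul_nonneg (by positivity) (Real.log_nonneg (by norm_num))
  refine ⟨c₀ + c₁, add_nonneg hc₀ hc₁, fun N x y hx hy hx0 hy0 => ?_⟩
  have hxp : ∀ i, (x ^ (2 * N + 1)) i ≠ 0 := fun i => pow_ne_zero _ (hx0 i)
  have hmul : x ^ (2 * N + 1) * (y / x ^ (2 * N + 1)) = y :=
    funext fun i => mul_div_cancel₀ _ (hxp i)
  have hz0 : y / x ^ (2 * N + 1) ≠ 0 := fun h => hy0 (by rw [← hmul, h, mul_zero])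
  obtain ⟨w, hw, hperp, hli⟩ := exists_padeVec_linearIndependent N hx hx0 hz0
  have hwh : logHeight w ≤ (N + 1) * c₁ + (N + 1) * logHeight x := by
    have hxne : x ≠ 0 := fun h => hx0 0 (congrFun h 0)
    have hle : mulHeight w ≤ (256 ^ (N + 1) : ℝ) ^ totalWeight K * mulHeight x ^ (N + 1) := by
      rcases hw with rfl | rfl
      · exact mulHeight_padeVec_le N hxne
      · exact mulHeight_padeVecShift_le N hxne
    have hlog := Real.log_le_log (mulHeight_pos _) hle
    rw [Real.log_mul (by positivity) (pow_ne_zero _ (mulHeight_ne_zero _)), Real.log_pow,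
      Real.log_pow, Real.log_pow, Nat.cast_succ] at hlog
    rw [logHeight_eq_log_mulHeight, logHeight_eq_log_mulHeight x]
    linear_combination hlog
  have hy : x ^ (2 * N + 1) ⬝ᵥ (y / x ^ (2 * N + 1)) = 0 := by
    rw [dotProduct, ← hy, ← Fin.sum_univ_three]
    exact Finset.sum_congr rfl fun i _ => congrFun hmul i
  have hxh : logHeight (x ^ (2 * N + 1)) ≤ _ :=
    (logHeight_eq_logHeight_crossProduct (fun h => hxp 0 (congrFun h 0)) hy hperp hli).trans_le
      (hcross _ _)
  rw [logHeight_pow] at hxh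
  push_cast at hxh
  linarith [mul_nonneg N.cast_nonneg hc₀]

end PadeInequality

section Cone

open NormedSpace Bornology

variable {E : Type*} [NormedAddCommGroup E] [NormedSpace ℝ E]

theorem exists_norm_normalize_sub_lt_of_not_isBounded [ProperSpace E] {S : Set E}
    (hS : ¬ IsBounded S) {ε : ℝ} (hε : 0 < ε) (R M : ℝ) :
    ∃ x ∈ S, ∃ y ∈ S, R < ‖x‖ ∧ M * ‖x‖ < ‖y‖ ∧ ‖normalize y - normalize x‖ < ε := by
  obtain ⟨t, -, htfin, ht⟩ :=
    (isCompact_closedBall (0 : E) 1).finite_cover_balls (half_pos hε)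
  have hcover : S ⊆ ⋃ u ∈ t, {x ∈ S | dist (normalize x) u < ε / 2} := by
    intro x hx
    have hmem : normalize x ∈ Metric.closedBall (0 : E) 1 := by
      rw [mem_closedBall_zero_iff]
      rcases eq_or_ne x 0 with rfl | hx0
      · simp
      · exact (norm_normalize_eq_one_iff.2 hx0).le
    obtain ⟨u, hu, hux⟩ := Set.mem_iUnion₂.1 (ht hmem)
    exact Set.mem_iUnion₂.2 ⟨u, hu, hx, hux⟩
  obtain ⟨u, -, hunb⟩ : ∃ u ∈ t, ¬ IsBounded {x ∈ S | dist (normalize x) u < ε / 2} := by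
    by_contra! h
    exact hS (((isBounded_biUnion htfin).2 h).subset hcover)
  have hlarge (r : ℝ) : ∃ x ∈ S, dist (normalize x) u < ε / 2 ∧ r < ‖x‖ := by
    by_contra! h
    exact hunb (isBounded_iff_forall_norm_le.2 ⟨r, fun x hx => h x hx.1 hx.2⟩)
  obtain ⟨x, hxS, hxu, hx⟩ := hlarge R
  obtain ⟨y, hyS, hyu, hy⟩ := hlarge (M * ‖x‖)
  refine ⟨x, hxS, y, hyS, hx, hy, ?_⟩
  rw [← dist_eq_norm]
  linarith [dist_triangle_right (normalize y) (normalize x) u]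

theorem norm_sub_smul_le_add {x y : E} {a : ℝ} (ha : 0 ≤ a) (hxy : a * ‖x‖ ≤ ‖y‖) :
    ‖y - a • x‖ ≤ (‖y‖ - a * ‖x‖) + a * ‖x‖ * ‖normalize y - normalize x‖ := by
  have hdecomp : y - a • x =
      (‖y‖ - a * ‖x‖) • normalize y + (a * ‖x‖) • (normalize y - normalize x) := by
    rw [sub_smul, smul_sub, norm_smul_normalize, mul_smul, mul_smul, norm_smul_normalize]
    abel
  have hy : ‖normalize y‖ ≤ 1 := by
    rcases eq_or_ne y 0 with rfl | hy0
    · simp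
    · exact (norm_normalize_eq_one_iff.2 hy0).le
  rw [hdecomp]
  refine (norm_add_le _ _).trans (add_le_add ?_ ?_)
  · rw [norm_smul, Real.norm_of_nonneg (sub_nonneg.2 hxy)]
    exact mul_le_of_le_one_right (sub_nonneg.2 hxy) hy
  · rw [norm_smul, Real.norm_of_nonneg (mul_nonneg ha (norm_nonneg x))]

theorem exists_lt_mul_norm_of_norm_normalize_sub_le {x y : E} {C c : ℝ} (hC : 0 ≤ C) (hc : 0 ≤ c)
    (hx : 4 * c + 1 ≤ ‖x‖) (hy : (16 * C + 8) * ‖x‖ ≤ ‖y‖)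
    (hxy : ‖normalize y - normalize x‖ ≤ 1 / (8 * (C + 1))) :
    ∃ N : ℕ, C * ‖y - (2 * N + 1 : ℝ) • x‖ + c * (N + 1) < N * ‖x‖ := by
  have hx0 : 0 < ‖x‖ := by linarith
  have hratio : 16 * C + 8 ≤ ‖y‖ / ‖x‖ := (le_div_iff₀ hx0).2 hy
  have hq : 0 ≤ (‖y‖ / ‖x‖ - 1) / 2 := by linarith
  -- `N` is chosen with `(2 * N + 1) * ‖x‖ ≤ ‖y‖ < (2 * N + 3) * ‖x‖`.
  refine ⟨⌊(‖y‖ / ‖x‖ - 1) / 2⌋₊, ?_⟩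
  set N := ⌊(‖y‖ / ‖x‖ - 1) / 2⌋₊
  have hfloor : (N : ℝ) ≤ (‖y‖ / ‖x‖ - 1) / 2 := Nat.floor_le hq
  have hfloor' : (‖y‖ / ‖x‖ - 1) / 2 < N + 1 := Nat.lt_floor_add_one _
  have hlow : (2 * N + 1) * ‖x‖ ≤ ‖y‖ := by rw [← le_div_iff₀ hx0]; linarith
  have hupp : ‖y‖ ≤ (2 * N + 3) * ‖x‖ := by rw [← div_le_iff₀ hx0]; linarith
  have hN : (8 * C + 2) * ‖x‖ < N * ‖x‖ := mul_lt_mul_of_pos_right (by linarith) hx0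
  have hCδ : C * ‖normalize y - normalize x‖ ≤ 1 / 8 :=
    calc C * ‖normalize y - normalize x‖ ≤ (C + 1) * (1 / (8 * (C + 1))) := by gcongr; linarith
      _ = 1 / 8 := by field_simp
  have hdist := mul_le_mul_of_nonneg_left (norm_sub_smul_le_add (by positivity) hlow) hC
  have hmain := mul_le_mul_of_nonneg_left hupp hC
  have hdir := mul_le_mul_of_nonneg_left hCδ (show 0 ≤ (2 * N + 1) * ‖x‖ by positivity)
  have hcN : c * (N + 1) ≤ (‖x‖ - 1) / 4 * (N + 1) := by gcongr; linarith
  nlinarith [hN]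

theorem isBounded_of_forall_mul_norm_le [ProperSpace E] {S : Set E} {C c : ℝ} (hC : 0 ≤ C)
    (hc : 0 ≤ c) (h : ∀ x ∈ S, ∀ y ∈ S, ∀ N : ℕ,
      N * ‖x‖ ≤ C * ‖y - (2 * N + 1 : ℝ) • x‖ + c * (N + 1)) :
    IsBounded S := by
  by_contra hS
  obtain ⟨x, hx, y, hy, hxc, hxy, hdir⟩ := exists_norm_normalize_sub_lt_of_not_isBounded hS
    (show 0 < 1 / (8 * (C + 1)) by positivity) (4 * c + 1) (16 * C + 8)
  obtain ⟨N, hN⟩ := exists_lt_mul_norm_of_norm_normalize_sub_le hC hc hxc.le hxy.le hdir.le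
  exact (h x hx y hy N).not_gt hN

end Cone

section UnitInequality

open Height

variable {K : Type*} [Field K] [AdmissibleAbsValues K]

theorem logHeight_vec3_one_le (a b : K) : logHeight ![a, b, 1] ≤ logHeight₁ a + logHeight₁ b := by
  have hmul : (![a, b, 1] : Fin 3 → K) = (![a, 1] ∘ ![0, 1, 1]) * (![b, 1] ∘ ![1, 0, 1]) := by
    funext i; fin_cases i <;> simp
  rw [hmul, logHeight₁_eq_logHeight, logHeight₁_eq_logHeight]
  exact (logHeight_mul_le _ _).trans (add_le_add (logHeight_comp_le _ _) (logHeight_comp_le _ _))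

theorem logHeight₁_le_logHeight {ι : Type*} [Finite ι] {x : ι → K} {j : ι} (hj : x j = 1) (i : ι) :
    logHeight₁ (x i) ≤ logHeight x := by
  have hcomp : (![x i, 1] : Fin 2 → K) = x ∘ ![i, j] := by
    funext k; fin_cases k <;> simp [hj]
  rw [logHeight₁_eq_logHeight, hcomp]
  exact logHeight_comp_le _ _

theorem exists_mul_max_logHeight₁_le (K : Type*) [Field K] [CharZero K] [AdmissibleAbsValues K] :
    ∃ c : ℝ, 0 ≤ c ∧ ∀ (N : ℕ) (x x' y y' : K), x + x' = 1 → y + y' = 1 → x ≠ 0 → x' ≠ 0 →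
      N * max (logHeight₁ x) (logHeight₁ x') ≤
        logHeight₁ (y / x ^ (2 * N + 1)) + logHeight₁ (y' / x' ^ (2 * N + 1)) + c * (N + 1) := by
  obtain ⟨c, hc, h⟩ := exists_mul_logHeight_le_logHeight_div_pow K
  refine ⟨c, hc, fun N x x' y y' hx hy hx0 hx0' => ?_⟩
  have hodd : Odd (2 * N + 1) := ⟨N, rfl⟩
  have hdiv : (![-y, -y', 1] : Fin 3 → K) / ![-x, -x', 1] ^ (2 * N + 1) =
      ![y / x ^ (2 * N + 1), y' / x' ^ (2 * N + 1), 1] := by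
    funext i
    fin_cases i <;> simp [hodd.neg_pow, neg_div_neg_eq]
  have hsum {a b : K} (hab : a + b = 1) : -a + -b + 1 = 0 := by rw [← hab]; ring
  have hmain := h N ![-x, -x', 1] ![-y, -y', 1] (hsum hx) (hsum hy)
    (by simp [Fin.forall_fin_succ, hx0, hx0']) (fun h0 => one_ne_zero (congrFun h0 2))
  rw [hdiv] at hmain
  have hmax : max (logHeight₁ x) (logHeight₁ x') ≤ logHeight ![-x, -x', 1] := by
    rw [← logHeight₁_neg x, ← logHeight₁_neg x']
    exact max_le (logHeight₁_le_logHeight (x := ![-x, -x', 1]) (j := 2) rfl 0)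
      (logHeight₁_le_logHeight (x := ![-x, -x', 1]) (j := 2) rfl 1)
  calc N * max (logHeight₁ x) (logHeight₁ x')
      ≤ N * logHeight ![-x, -x', 1] := by gcongr
    _ ≤ logHeight ![y / x ^ (2 * N + 1), y' / x' ^ (2 * N + 1), 1] + c * (N + 1) := hmain
    _ ≤ _ := by gcongr; exact logHeight_vec3_one_le _ _

end UnitInequality

section SUnitEquation

open Height Height.AdmissibleAbsValues Real

variable {K : Type*} [Field K] [AdmissibleAbsValues K]

theorem posLog_abv_le_logHeight₁ {u : K} (hu : u ≠ 0) {v : AbsoluteValue K ℝ}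
    (hv : v ∈ archAbsVal (K := K) ∨ v ∈ nonarchAbsVal (K := K)) : log⁺ (v u) ≤ logHeight₁ u := by
  have hpos : ∀ t ∈ archAbsVal.map fun v : AbsoluteValue K ℝ => log⁺ (v u), 0 ≤ t := by
    intro t ht
    obtain ⟨v, -, rfl⟩ := Multiset.mem_map.1 ht
    exact posLog_nonneg
  rw [logHeight₁_eq]
  rcases hv with hv | hv
  · exact le_add_of_le_of_nonneg
      (Multiset.single_le_sum hpos _ (Multiset.mem_map_of_mem (fun v => log⁺ (v u)) hv))
      (finsum_nonneg fun _ => posLog_nonneg)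
  · have hsupp : (Function.support fun v : nonarchAbsVal (K := K) => log⁺ (v.1 u)).Finite :=
      (hasFiniteMulSupport hu).subset fun v hv => fun h => hv (by simp [h])
    exact le_add_of_nonneg_of_le (Multiset.sum_nonneg hpos)
      (single_le_finsum (⟨v, hv⟩ : nonarchAbsVal (K := K)) hsupp fun _ => posLog_nonneg)

theorem abs_log_abv_le_logHeight₁ {u : K} (hu : u ≠ 0) {v : AbsoluteValue K ℝ}
    (hv : v ∈ archAbsVal (K := K) ∨ v ∈ nonarchAbsVal (K := K)) : |log (v u)| ≤ logHeight₁ u := by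
  have hle := posLog_abv_le_logHeight₁ (inv_ne_zero hu) hv
  rw [logHeight₁_inv, map_inv₀] at hle
  have hneg : log (v u)⁻¹ ≤ logHeight₁ u := (le_max_right _ _).trans hle
  rw [log_inv] at hneg
  exact abs_le'.2 ⟨(le_max_right _ _).trans (posLog_abv_le_logHeight₁ hu hv), hneg⟩

/-- The `S`-units of `K`, for a finite set `S` of nonarchimedean absolute values. -/
def IsSUnit (S : Finset (nonarchAbsVal (K := K))) (u : K) : Prop :=
  u ≠ 0 ∧ ∀ v ∉ S, v.1 u = 1

theorem IsSUnit.div {S : Finset (nonarchAbsVal (K := K))} {u w : K} (hu : IsSUnit S u)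
    (hw : IsSUnit S w) : IsSUnit S (u / w) :=
  ⟨div_ne_zero hu.1 hw.1, fun v hv => by rw [map_div₀, hu.2 v hv, hw.2 v hv, div_one]⟩

theorem IsSUnit.pow {S : Finset (nonarchAbsVal (K := K))} {u : K} (hu : IsSUnit S u) (n : ℕ) :
    IsSUnit S (u ^ n) :=
  ⟨pow_ne_zero n hu.1, fun v hv => by rw [map_pow, hu.2 v hv, one_pow]⟩

open Classical in
/-- The archimedean absolute values of `K` together with those in `S`. -/
noncomputable def archUnion (S : Finset (nonarchAbsVal (K := K))) : Finset (AbsoluteValue K ℝ) :=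
  (archAbsVal (K := K)).toFinset ∪ S.image Subtype.val

/-- The logarithmic embedding of the `S`-units (with the value `log 0 = 0` at `0`). -/
noncomputable def logEmbedding (S : Finset (nonarchAbsVal (K := K))) (u : K) : archUnion S → ℝ :=
  fun v => log (v.1 u)

theorem mem_archUnion {S : Finset (nonarchAbsVal (K := K))} {v : AbsoluteValue K ℝ} :
    v ∈ archUnion S ↔ v ∈ archAbsVal (K := K) ∨ ∃ w ∈ S, w.1 = v := by
  classical
  rw [archUnion, Finset.mem_union, Multiset.mem_toFinset, Finset.mem_image]

theorem logEmbedding_div_pow (S : Finset (nonarchAbsVal (K := K))) {u w : K} (hu : u ≠ 0)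
    (hw : w ≠ 0) (n : ℕ) :
    logEmbedding S (u / w ^ n) = logEmbedding S u - (n : ℝ) • logEmbedding S w := by
  funext v
  simp only [logEmbedding, map_div₀, map_pow, Pi.sub_apply, Pi.smul_apply, smul_eq_mul]
  rw [log_div (v.1.ne_zero hu) (pow_ne_zero _ (v.1.ne_zero hw)), log_pow]

theorem norm_logEmbedding_le_logHeight₁ (S : Finset (nonarchAbsVal (K := K))) {u : K}
    (hu : u ≠ 0) : ‖logEmbedding S u‖ ≤ logHeight₁ u := by
  refine (pi_norm_le_iff_of_nonneg (zero_le_logHeight₁ _)).2 fun v => ?_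
  refine abs_log_abv_le_logHeight₁ hu ((mem_archUnion.1 v.2).imp_right ?_)
  rintro ⟨w, -, hw⟩
  exact hw ▸ w.2

theorem IsSUnit.logHeight₁_le_mul_norm_logEmbedding {S : Finset (nonarchAbsVal (K := K))} {u : K}
    (hu : IsSUnit S u) : logHeight₁ u ≤ (totalWeight K + S.card) * ‖logEmbedding S u‖ := by
  have hv (v : AbsoluteValue K ℝ) (hv : v ∈ archUnion S) : log⁺ (v u) ≤ ‖logEmbedding S u‖ :=
    max_le (norm_nonneg _)
      ((le_abs_self _).trans (norm_le_pi_norm (logEmbedding S u) ⟨v, hv⟩))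
  rw [logHeight₁_eq, add_mul, ← nsmul_eq_mul, ← nsmul_eq_mul]
  refine add_le_add ?_ ?_
  · refine (Multiset.sum_le_card_nsmul _ ‖logEmbedding S u‖ fun t ht => ?_).trans_eq ?_
    · obtain ⟨v, hmem, rfl⟩ := Multiset.mem_map.1 ht
      exact hv v (mem_archUnion.2 (Or.inl hmem))
    · rw [Multiset.card_map, totalWeight]
  · rw [finsum_eq_sum_of_support_subset (s := S)]
    · exact Finset.sum_le_card_nsmul S _ _ fun v hmem =>
        hv v.1 (mem_archUnion.2 (Or.inr ⟨v, hmem, rfl⟩))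
    · intro v hsupp
      by_contra hmem
      exact hsupp (by simp [hu.2 v hmem])

theorem isBounded_logEmbedding_unitEquation [CharZero K] (S : Finset (nonarchAbsVal (K := K))) :
    Bornology.IsBounded ((fun x => (logEmbedding S x, logEmbedding S (1 - x))) ''
      {x : K | IsSUnit S x ∧ IsSUnit S (1 - x)}) := by
  set D : ℝ := totalWeight K + S.card
  have hD : 0 ≤ D := by positivity
  obtain ⟨c, hc, hineq⟩ := exists_mul_max_logHeight₁_le K
  refine isBounded_of_forall_mul_norm_le (C := 2 * D) (by positivity) hc ?_
  rintro _ ⟨x, ⟨hx, hx'⟩, rfl⟩ _ ⟨y, ⟨hy, hy'⟩, rfl⟩ N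
  have hheight {u w : K} (hu : IsSUnit S u) (hw : IsSUnit S w) :
      logHeight₁ (u / w ^ (2 * N + 1)) ≤
        D * ‖logEmbedding S u - (2 * N + 1 : ℝ) • logEmbedding S w‖ := by
    have hle := (hu.div (hw.pow (2 * N + 1))).logHeight₁_le_mul_norm_logEmbedding
    rwa [logEmbedding_div_pow S hu.1 hw.1, Nat.cast_add_one, Nat.cast_mul, Nat.cast_two] at hle
  set p := (logEmbedding S x, logEmbedding S (1 - x))
  set q := (logEmbedding S y, logEmbedding S (1 - y))
  calc N * ‖p‖
      ≤ N * max (logHeight₁ x) (logHeight₁ (1 - x)) := by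
        gcongr
        exact max_le_max (norm_logEmbedding_le_logHeight₁ S hx.1)
          (norm_logEmbedding_le_logHeight₁ S hx'.1)
    _ ≤ logHeight₁ (y / x ^ (2 * N + 1)) + logHeight₁ ((1 - y) / (1 - x) ^ (2 * N + 1))
          + c * (N + 1) :=
        hineq N x (1 - x) y (1 - y) (add_sub_cancel _ _) (add_sub_cancel _ _) hx.1 hx'.1
    _ ≤ D * ‖q - (2 * N + 1 : ℝ) • p‖ + D * ‖q - (2 * N + 1 : ℝ) • p‖ + c * (N + 1) := by
        gcongr
        · exact (hheight hy hx).trans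
            (mul_le_mul_of_nonneg_left (norm_fst_le (q - (2 * N + 1 : ℝ) • p)) hD)
        · exact (hheight hy' hx').trans
            (mul_le_mul_of_nonneg_left (norm_snd_le (q - (2 * N + 1 : ℝ) • p)) hD)
    _ = 2 * D * ‖q - (2 * N + 1 : ℝ) • p‖ + c * (N + 1) := by ring

theorem finite_isSUnit_unitEquation [CharZero K] [Northcott (logHeight₁ : K → ℝ)]
    (S : Finset (nonarchAbsVal (K := K))) :
    {x : K | IsSUnit S x ∧ IsSUnit S (1 - x)}.Finite := by
  obtain ⟨B, hB⟩ := (isBounded_logEmbedding_unitEquation S).exists_norm_le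
  refine (Northcott.finite_le (h := (logHeight₁ : K → ℝ))
    ((totalWeight K + S.card) * B)).subset fun x hx => ?_
  refine hx.1.logHeight₁_le_mul_norm_logEmbedding.trans ?_
  gcongr
  exact (norm_fst_le (logEmbedding S x, logEmbedding S (1 - x))).trans (hB _ ⟨x, hx, rfl⟩)

end SUnitEquation

section FiniteTypeRings

variable {A : Type*} [CommRing A] [Algebra.FiniteType ℤ A] {F : Type*} [CommRing F]

theorem exists_finset_range_le_closure (φ : A →+* F) :
    ∃ s : Finset F, φ.range ≤ Subring.closure (s : Set F) := by
  classical
  obtain ⟨s, hs⟩ := (Algebra.FiniteType.out : (⊤ : Subalgebra ℤ A).FG)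
  refine ⟨s.image φ, ?_⟩
  have htop : Algebra.adjoin ℤ (s : Set A) ≤
      subalgebraOfSubring ((Subring.closure (s.image φ : Set F)).comap φ) :=
    Algebra.adjoin_le fun x hx => Subring.subset_closure (Finset.mem_image_of_mem φ hx)
  rintro _ ⟨a, rfl⟩
  exact htop (hs ▸ Algebra.mem_top)

theorem finite_setOf_not_range_le (φ : A →+* F) {ι : Type*} {V : ι → Subring F}
    (hV : ∀ x, {i | x ∉ V i}.Finite) : {i | ¬ φ.range ≤ V i}.Finite := by
  obtain ⟨s, hs⟩ := exists_finset_range_le_closure φ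
  refine (s.finite_toSet.biUnion fun x _ => hV x).subset fun i hi => ?_
  by_contra hmem
  simp only [Set.mem_iUnion, Set.mem_ofPred_eq, not_exists, not_not] at hmem
  exact hi (hs.trans ((Subring.closure_le).2 hmem))

end FiniteTypeRings

section UnitEquationInNumberField

open Height Height.AdmissibleAbsValues

variable {K : Type*} [Field K] {A : Type*} [CommRing A] [Algebra.FiniteType ℤ A] (φ : A →+* K)

/-- The valuation ring `{x | v x ≤ 1}` of a nonarchimedean absolute value. -/
def nonarchSubring {v : AbsoluteValue K ℝ} (hv : IsNonarchimedean v) : Subring K where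
  carrier := {x | v x ≤ 1}
  mul_mem' := fun {x y} hx hy => (map_mul v x y).trans_le (mul_le_one₀ hx (v.nonneg y) hy)
  one_mem' := (map_one v).le
  add_mem' := fun {x y} hx hy => (hv x y).trans (max_le hx hy)
  zero_mem' := (map_zero v).trans_le zero_le_one
  neg_mem' := fun {x} hx => (v.map_neg x).trans_le hx

variable [AdmissibleAbsValues K]

theorem exists_forall_isSUnit_map_units :
    ∃ S : Finset (nonarchAbsVal (K := K)), ∀ u : Aˣ, IsSUnit S (φ u) := by
  have hfin : {v : nonarchAbsVal (K := K) |
      ¬ φ.range ≤ nonarchSubring (isNonarchimedean v.1 v.2)}.Finite := by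
    refine finite_setOf_not_range_le φ fun x => ?_
    rcases eq_or_ne x 0 with rfl | hx
    · simp only [zero_mem, not_true_eq_false, Set.ofPred_false, Set.finite_empty]
    · exact (hasFiniteMulSupport hx).subset fun v hv => fun h => hv h.le
  refine ⟨hfin.toFinset, fun u => ⟨(u.map φ.toMonoidHom).ne_zero, fun v hv => ?_⟩⟩
  rw [Set.Finite.mem_toFinset, Set.mem_ofPred_eq, not_not] at hv
  have hle (w : Aˣ) : v.1 (φ w) ≤ 1 := hv ⟨w, rfl⟩
  have hinv : v.1 (φ u) * v.1 (φ ↑u⁻¹) = 1 := by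
    rw [← map_mul, ← map_mul, Units.mul_inv, map_one, map_one]
  exact (hle u).antisymm (hinv ▸ mul_le_of_le_one_right (v.1.nonneg _) (hle u⁻¹))

theorem finite_image_unitEquation [CharZero K] [Northcott (logHeight₁ : K → ℝ)] :
    ((fun u : Aˣ => φ u) '' {u : Aˣ | IsUnit (1 - (u : A))}).Finite := by
  obtain ⟨S, hS⟩ := exists_forall_isSUnit_map_units φ
  refine (finite_isSUnit_unitEquation S).subset ?_
  rintro _ ⟨u, ⟨w, hw⟩, rfl⟩
  refine ⟨hS u, ?_⟩
  rw [← map_one φ, ← map_sub, ← hw]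
  exact hS w

end UnitEquationInNumberField

theorem isNoetherian_of_map_ker_le {R M N P : Type*} [Ring R] [AddCommGroup M] [AddCommGroup N]
    [AddCommGroup P] [Module R M] [Module R N] [Module R P] [IsNoetherian R N] {Q : Submodule R P}
    [IsNoetherian R Q] (g : M →ₗ[R] N) {j : M →ₗ[R] P} (hj : Function.Injective j)
    (hQ : ∀ x, g x = 0 → j x ∈ Q) : IsNoetherian R M := by
  have : IsNoetherian R g.ker :=
    isNoetherian_of_injective ((j ∘ₗ g.ker.subtype).codRestrict Q fun x => hQ x x.2)
      fun x y hxy => Subtype.ext (hj (congrArg Subtype.val hxy))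
  exact isNoetherian_of_range_eq_ker g.ker.subtype g (Submodule.range_subtype _)

section UnitsOfNumberField

open IsDedekindDomain

variable {A : Type*} [CommRing A] [Algebra.FiniteType ℤ A]

theorem exists_addMonoidHom_units_of_isDedekindDomain (D : Type*) [CommRing D] [IsDedekindDomain D]
    {F : Type*} [Field F] [Algebra D F] [IsFractionRing D F] (φ : A →+* F) :
    ∃ (n : ℕ) (g : Additive Aˣ →+ (Fin n → ℤ)),
      ∀ u : Aˣ, g (Additive.ofMul u) = 0 → φ u ∈ (algebraMap D F).range := by
  have hfin : {v : HeightOneSpectrum D | ¬ φ.range ≤ (v.valuation F).integer}.Finite :=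
    finite_setOf_not_range_le φ fun x =>
      (HeightOneSpectrum.Support.finite D x).subset fun v (hv : ¬ v.valuation F x ≤ 1) =>
        not_le.1 hv
  obtain ⟨n, e, he⟩ := hfin.fin_param
  refine ⟨n, AddMonoidHom.pi fun i => MonoidHom.toAdditiveLeft
    ((e i).valuationOfNeZero.comp (Units.map (φ : A →* F))), fun u hu => ?_⟩
  refine HeightOneSpectrum.mem_integers_of_valuation_le_one F _ fun v => ?_
  by_cases hv : φ.range ≤ (v.valuation F).integer
  · exact hv ⟨u, rfl⟩
  · obtain ⟨i, rfl⟩ := he.2.ge hv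
    have hi : (e i).valuationOfNeZero (Units.map (φ : A →* F) u) = 1 := congrFun hu i
    have := (e i).valuationOfNeZero_eq (Units.map (φ : A →* F) u)
    rw [hi] at this
    exact this.ge

theorem isNoetherian_units_of_injective_numberField {K : Type*} [Field K] [NumberField K]
    {φ : A →+* K} (hφ : Function.Injective φ) : IsNoetherian ℤ (Additive Aˣ) := by
  obtain ⟨n, g, hg⟩ :=
    exists_addMonoidHom_units_of_isDedekindDomain (NumberField.RingOfIntegers K) φ
  let ψ : Additive (NumberField.RingOfIntegers K)ˣ →ₗ[ℤ] Additive Kˣ :=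
    (Units.map (algebraMap (NumberField.RingOfIntegers K) K : _ →* K)).toAdditive.toIntLinearMap
  have : IsNoetherian ℤ ψ.range := isNoetherian_range ψ
  refine isNoetherian_of_map_ker_le (Q := ψ.range) g.toIntLinearMap
    (j := (Units.map (φ : A →* K)).toAdditive.toIntLinearMap) (Units.map_injective hφ)
    fun x hx => ?_
  obtain ⟨y, hy⟩ := hg x.toMul hx
  obtain ⟨z, hz⟩ := hg (-x).toMul ((map_neg g x).trans (neg_eq_zero.2 hx))
  have hyz : y * z = 1 := by
    apply FaithfulSMul.algebraMap_injective (NumberField.RingOfIntegers K) K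
    rw [map_mul, hy, hz, ← map_mul, map_one, toMul_neg, Units.mul_inv, map_one]
  exact ⟨Additive.ofMul (Units.mkOfMulEqOne y z hyz), Units.ext hy⟩

end UnitsOfNumberField

section FunctionFields

open Polynomial IntermediateField

variable {k F : Type*} [Field k] [Field F] [Algebra k F] {x : F}

theorem isPrincipalIdealRing_adjoin_of_transcendental (hx : Transcendental k x) :
    IsPrincipalIdealRing (Algebra.adjoin k {x}) :=
  .of_surjective (algEquivOfTranscendental k x hx).toRingEquiv.toRingHom
    (algEquivOfTranscendental k x hx).surjective

theorem adjoin_simple_inv_eq (k : Type*) {F : Type*} [Field k] [Field F] [Algebra k F] (x : F) :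
    k⟮x⁻¹⟯ = k⟮x⟯ := by
  refine le_antisymm (adjoin_simple_le_iff.2 (inv_mem (mem_adjoin_simple_self k x)))
    (adjoin_simple_le_iff.2 ?_)
  simpa only [inv_inv] using inv_mem (mem_adjoin_simple_self k x⁻¹)

theorem mem_range_algebraMap_of_mem_adjoin_of_mem_adjoin_inv (hx : Transcendental k x) {z : F}
    (hz : z ∈ Algebra.adjoin k {x}) (hz' : z ∈ Algebra.adjoin k {x⁻¹}) :
    z ∈ (algebraMap k F).range := by
  rw [Algebra.adjoin_singleton_eq_range_aeval] at hz hz'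
  obtain ⟨p, rfl⟩ := hz
  obtain ⟨q, hq : aeval x⁻¹ q = aeval x p⟩ := hz'
  have hx0 : x ≠ 0 := fun h => hx (h ▸ isAlgebraic_zero)
  let := invertibleOfNonzero (inv_ne_zero hx0)
  have hrev : q.reverse = p * X ^ q.natDegree := by
    apply transcendental_iff_injective.1 hx
    have := eval₂_reverse_mul_pow (algebraMap k F) x⁻¹ q
    rw [← aeval_def, ← aeval_def, hq, invOf_eq_inv, inv_inv, inv_pow, ← div_eq_mul_inv,
      div_eq_iff (pow_ne_zero _ hx0)] at this
    rw [this, map_mul, aeval_X_pow]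
  rcases eq_or_ne p 0 with rfl | hp
  · exact ⟨0, by rw [map_zero, map_zero]⟩
  have hdeg : p.natDegree = 0 := by
    have := q.reverse_natDegree_le
    rw [hrev, natDegree_mul_X_pow _ hp] at this
    lia
  rw [eq_C_of_natDegree_eq_zero hdeg]
  exact ⟨p.coeff 0, (aeval_C x _).symm⟩

open scoped IntermediateField.algebraAdjoinAdjoin in
theorem coeff_minpoly_mem_adjoin_of_isIntegral (hx : Transcendental k x)
    {E : IntermediateField k F} (hE : E = k⟮x⟯) {z : F} (hz : IsIntegral (Algebra.adjoin k {x}) z)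
    (n : ℕ) : ((minpoly E z).coeff n : F) ∈ Algebra.adjoin k {x} := by
  subst hE
  have := isPrincipalIdealRing_adjoin_of_transcendental hx
  rw [minpoly.isIntegrallyClosed_eq_field_fractions' (R := Algebra.adjoin k {x}) k⟮x⟯ hz,
    coeff_map]
  exact ((minpoly (Algebra.adjoin k {x}) z).coeff n).2

open scoped IntermediateField.algebraAdjoinAdjoin in
theorem isIntegral_of_isIntegral_adjoin_of_isIntegral_adjoin_inv (hx : Transcendental k x) {z : F}
    (hz : IsIntegral (Algebra.adjoin k {x}) z) (hz' : IsIntegral (Algebra.adjoin k {x⁻¹}) z) :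
    IsIntegral k z := by
  have hx' : Transcendental k x⁻¹ := fun h => hx (IsAlgebraic.inv_iff.1 h)
  have hcoeff (n : ℕ) : ((minpoly k⟮x⟯ z).coeff n : F) ∈ (algebraMap k F).range :=
    mem_range_algebraMap_of_mem_adjoin_of_mem_adjoin_inv hx
      (coeff_minpoly_mem_adjoin_of_isIntegral hx rfl hz n)
      (coeff_minpoly_mem_adjoin_of_isIntegral hx' (adjoin_simple_inv_eq k x).symm hz' n)
  have hlifts : (minpoly k⟮x⟯ z).map (algebraMap k⟮x⟯ F) ∈ lifts (algebraMap k F) :=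
    (lifts_iff_coeff_lifts _).2 fun n => by rw [coeff_map]; exact hcoeff n
  have hmonic : (minpoly k⟮x⟯ z).Monic := minpoly.monic hz.tower_top
  obtain ⟨q, hq, -, hqm⟩ := lifts_and_degree_eq_and_monic hlifts (hmonic.map _)
  refine ⟨q, hqm, ?_⟩
  rw [← eval_map, hq, eval_map_algebraMap, minpoly.aeval]

open scoped IntermediateField.algebraAdjoinAdjoin in
theorem exists_addMonoidHom_units_isIntegral_adjoin [CharZero k] (hx : Transcendental k x)
    [FiniteDimensional k⟮x⟯ F] {A : Type*} [CommRing A] [Algebra.FiniteType ℤ A] (φ : A →+* F) :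
    ∃ (n : ℕ) (g : Additive Aˣ →+ (Fin n → ℤ)),
      ∀ u : Aˣ, g (Additive.ofMul u) = 0 → IsIntegral (Algebra.adjoin k {x}) (φ u) := by
  have := isPrincipalIdealRing_adjoin_of_transcendental hx
  have : IsDedekindDomain (integralClosure (Algebra.adjoin k {x}) F) :=
    integralClosure.isDedekindDomain _ k⟮x⟯ F
  have : IsFractionRing (integralClosure (Algebra.adjoin k {x}) F) F :=
    integralClosure.isFractionRing_of_finite_extension k⟮x⟯ F
  obtain ⟨n, g, hg⟩ :=
    exists_addMonoidHom_units_of_isDedekindDomain (integralClosure (Algebra.adjoin k {x}) F) φ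
  refine ⟨n, g, fun u hu => ?_⟩
  obtain ⟨y, hy⟩ := hg u hu
  exact hy ▸ y.2

end FunctionFields

section UnitGroups

universe u

open IntermediateField

theorem exists_finset_forall_map_mem_adjoin (k : Type*) {F : Type*} [Field k] [Field F]
    [Algebra k F] {A : Type*} [CommRing A] [Algebra.FiniteType ℤ A] (φ : A →+* F) :
    ∃ s : Finset F, ∀ a, φ a ∈ Algebra.adjoin k (s : Set F) := by
  obtain ⟨s, hs⟩ := exists_finset_range_le_closure φ
  have hle : Subring.closure (s : Set F) ≤ (Algebra.adjoin k (s : Set F)).toSubring :=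
    Subring.closure_le.2 Algebra.subset_adjoin
  exact ⟨s, fun a => hle (hs ⟨a, rfl⟩)⟩

theorem exists_finiteDimensional_forall_map_mem (k : Type*) {F : Type*} [Field k] [Field F]
    [Algebra k F] [Algebra.IsAlgebraic k F] {A : Type*} [CommRing A] [Algebra.FiniteType ℤ A]
    (φ : A →+* F) : ∃ E : IntermediateField k F, FiniteDimensional k E ∧ ∀ a, φ a ∈ E := by
  obtain ⟨s, hs⟩ := exists_finset_forall_map_mem_adjoin k φ
  exact ⟨adjoin k (s : Set F), finiteDimensional_adjoin fun x _ => Algebra.IsIntegral.isIntegral x,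
    fun a => algebra_adjoin_le_adjoin k _ (hs a)⟩

theorem exists_algHom_finiteDimensional_of_not_isUnit {k : Type*} {B : Type u} [Field k]
    [CommRing B] [Algebra k B] [Algebra.FiniteType k B] {b : B} (hb : ¬ IsUnit b) :
    ∃ (k' : Type u) (_ : Field k') (_ : Algebra k k') (_ : FiniteDimensional k k') (ψ : B →ₐ[k] k'),
      ψ b = 0 := by
  obtain ⟨M, hM, hbM⟩ := exists_max_ideal_of_mem_nonunits hb
  let := Ideal.Quotient.field M
  exact ⟨B ⧸ M, inferInstance, inferInstance, finite_of_finite_type_of_isJacobsonRing k (B ⧸ M),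
    Ideal.Quotient.mkₐ k M, Ideal.Quotient.eq_zero_iff_mem.2 hbM⟩

theorem exists_ringHom_finiteDimensional_of_isIntegral (k : Type*) {F : Type u} [Field k] [Field F]
    [Algebra k F] {A : Type*} [CommRing A] [Algebra.FiniteType ℤ A] (φ : A →+* F) :
    ∃ (k' : Type u) (_ : Field k') (_ : Algebra k k') (_ : FiniteDimensional k k') (ψ : A →+* k'),
      ∀ a, IsIntegral k (φ a) → ψ a = 0 → φ a = 0 := by
  obtain ⟨s, hs⟩ := exists_finset_forall_map_mem_adjoin k φ
  set B := Algebra.adjoin k (s : Set F)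
  have : Algebra.FiniteType k B := B.fg_iff_finiteType.1 ⟨s, rfl⟩
  obtain ⟨k', _, _, _, ψ, -⟩ :=
    exists_algHom_finiteDimensional_of_not_isUnit (k := k) (not_isUnit_zero (M₀ := B))
  refine ⟨k', inferInstance, inferInstance, inferInstance,
    ψ.toRingHom.comp (φ.codRestrict B hs), fun a ha h0 => ?_⟩
  by_contra hne
  have hint : IsIntegral k (φ.codRestrict B hs a) :=
    (isIntegral_algHom_iff B.val Subtype.val_injective).1 ha
  exact ((hint.isUnit fun h => hne (congrArg Subtype.val h)).map ψ).ne_zero h0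

theorem finiteDimensional_adjoin_simple_algebraMap {k M F : Type*} [Field k] [Field M] [Field F]
    [Algebra k M] [Algebra k F] [Algebra M F] [IsScalarTower k M F] [FiniteDimensional M F] {x : M}
    (hx : k⟮x⟯ = ⊤) : FiniteDimensional k⟮algebraMap M F x⟯ F := by
  have hmem (m : M) : algebraMap M F m ∈ k⟮algebraMap M F x⟯ := by
    have := adjoin_map k {x} (IsScalarTower.toAlgHom k M F)
    rw [Set.image_singleton, hx] at this
    exact this.le ⟨m, mem_top, rfl⟩
  let : Algebra M k⟮algebraMap M F x⟯ := ((algebraMap M F).codRestrict _ hmem).toAlgebra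
  have : IsScalarTower M k⟮algebraMap M F x⟯ F := .of_algebraMap_eq fun _ => rfl
  exact Module.Finite.of_restrictScalars_finite M _ F

/-- Every finitely generated subring of an algebraic extension of `k` has a finitely generated
group of units. The subring is encoded as an abstract ring with an embedding, so that the property
passes to specializations. -/
def HasNoetherianUnits (k : Type u) [Field k] : Prop :=
  ∀ (F : Type u) [Field F] [Algebra k F] [Algebra.IsAlgebraic k F] (A : Type u) [CommRing A]
    [Algebra.FiniteType ℤ A] (φ : A →+* F), Function.Injective φ → IsNoetherian ℤ (Additive Aˣ)

theorem HasNoetherianUnits.of_isAlgebraic_rat (k : Type u) [Field k] [CharZero k]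
    [Algebra.IsAlgebraic ℚ k] : HasNoetherianUnits k := by
  intro F _ _ _ A _ _ φ hφ
  have : CharZero F := charZero_of_injective_algebraMap (algebraMap k F).injective
  have : Algebra.IsAlgebraic ℚ F := Algebra.IsAlgebraic.trans ℚ k F
  obtain ⟨E, _, hE⟩ := exists_finiteDimensional_forall_map_mem ℚ φ
  have : NumberField E := { to_charZero := inferInstance }
  exact isNoetherian_units_of_injective_numberField (φ := φ.codRestrict E hE)
    fun x y h => hφ (congrArg Subtype.val h)

theorem HasNoetherianUnits.of_isAlgebraic {k M : Type u} [Field k] [Field M] [Algebra k M]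
    [Algebra.IsAlgebraic k M] (hk : HasNoetherianUnits k) : HasNoetherianUnits M := by
  intro F _ _ _ A _ _ φ hφ
  let : Algebra k F := ((algebraMap M F).comp (algebraMap k M)).toAlgebra
  have : IsScalarTower k M F := .of_algebraMap_eq fun _ => rfl
  have : Algebra.IsAlgebraic k F := .trans k M F
  exact hk F A φ hφ

/-- A unit with no zeros or poles above the two charts of the line over `k` with coordinate `x` is
algebraic over `k`, so a specialization which is injective on algebraic elements detects it. -/
theorem HasNoetherianUnits.isNoetherian_units_of_transcendental {k F : Type u} [Field k]
    [CharZero k] [Field F] [Algebra k F] (hk : HasNoetherianUnits k) {x : F}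
    (hx : Transcendental k x) [FiniteDimensional k⟮x⟯ F] {A : Type*} [CommRing A]
    [Algebra.FiniteType ℤ A] {φ : A →+* F} (hφ : Function.Injective φ) :
    IsNoetherian ℤ (Additive Aˣ) := by
  have : FiniteDimensional k⟮x⁻¹⟯ F := by rw [adjoin_simple_inv_eq]; infer_instance
  have hx' : Transcendental k x⁻¹ := fun h => hx (IsAlgebraic.inv_iff.1 h)
  obtain ⟨n₁, g₁, hg₁⟩ := exists_addMonoidHom_units_isIntegral_adjoin hx φ
  obtain ⟨n₂, g₂, hg₂⟩ := exists_addMonoidHom_units_isIntegral_adjoin hx' φ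
  obtain ⟨k', _, _, _, ψ, hψ⟩ := exists_ringHom_finiteDimensional_of_isIntegral k φ
  have : Algebra.FiniteType ℤ ψ.range :=
    .of_surjective ψ.rangeRestrict.toIntAlgHom ψ.rangeRestrict_surjective
  have : IsNoetherian ℤ (Additive ψ.rangeˣ) := hk k' ψ.range ψ.range.subtype Subtype.val_injective
  let g₃ : Additive Aˣ →+ Additive ψ.rangeˣ := (Units.map ψ.rangeRestrict.toMonoidHom).toAdditive
  refine isNoetherian_of_injective ((g₁.prod g₂).prod g₃).toIntLinearMap
    ((injective_iff_map_eq_zero _).2 fun u hu => ?_)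
  obtain ⟨⟨hu₁, hu₂⟩, hu₃⟩ : (g₁ u = 0 ∧ g₂ u = 0) ∧ g₃ u = 0 :=
    ⟨Prod.ext_iff.1 (congrArg Prod.fst hu), congrArg Prod.snd hu⟩
  have hint : IsIntegral k (φ u.toMul) :=
    isIntegral_of_isIntegral_adjoin_of_isIntegral_adjoin_inv hx (hg₁ _ hu₁) (hg₂ _ hu₂)
  have hψu : ψ u.toMul = 1 := congrArg (fun v : Additive ψ.rangeˣ => (v.toMul : ψ.range).1) hu₃
  have hφu : φ (u.toMul - 1) = 0 :=
    hψ _ (by rw [map_sub, map_one]; exact hint.sub isIntegral_one)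
      (by rw [map_sub, map_one, hψu, sub_self])
  exact Units.ext (sub_eq_zero.1 ((map_eq_zero_iff φ hφ).1 hφu))

theorem HasNoetherianUnits.of_adjoin_simple_eq_top {k M : Type u} [Field k] [CharZero k] [Field M]
    [Algebra k M] (hk : HasNoetherianUnits k) {x : M} (hx : k⟮x⟯ = ⊤) : HasNoetherianUnits M := by
  by_cases hxk : IsIntegral k x
  · have := isAlgebraic_adjoin_simple hxk
    rw [hx] at this
    have : Algebra.IsAlgebraic k M := topEquiv.isAlgebraic
    exact hk.of_isAlgebraic
  intro F _ _ _ A _ _ φ hφ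
  obtain ⟨E, _, hE⟩ := exists_finiteDimensional_forall_map_mem M φ
  let : Algebra k F := ((algebraMap M F).comp (algebraMap k M)).toAlgebra
  have : IsScalarTower k M F := .of_algebraMap_eq fun _ => rfl
  have := finiteDimensional_adjoin_simple_algebraMap (F := E) hx
  have hxE : Transcendental k (algebraMap M E x) := fun h => hxk
    ((isAlgebraic_algebraMap_iff (algebraMap M E).injective).1 h).isIntegral
  exact hk.isNoetherian_units_of_transcendental hxE (φ := φ.codRestrict E hE)
    fun x y h => hφ (congrArg Subtype.val h)

theorem isNoetherian_units_of_finiteType_int (A : Type u) [CommRing A] [IsDomain A] [CharZero A]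
    [Algebra.FiniteType ℤ A] : IsNoetherian ℤ (Additive Aˣ) := by
  let F := FractionRing A
  have : CharZero F := charZero_of_injective_algebraMap (IsFractionRing.injective A F)
  obtain ⟨s, hs⟩ := exists_finset_forall_map_mem_adjoin ℚ (algebraMap A F)
  have hunits : HasNoetherianUnits (adjoin ℚ (s : Set F)) := by
    refine induction_on_adjoin_finset s (fun E => HasNoetherianUnits E) (.of_isAlgebraic_rat _)
      fun E x _ hE => hE.of_adjoin_simple_eq_top (M := E⟮x⟯) (x := AdjoinSimple.gen E x) ?_
    apply map_injective E⟮x⟯.val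
    rw [adjoin_map, Set.image_singleton, ← AlgHom.fieldRange_eq_map, fieldRange_val]
    rfl
  exact hunits _ A ((algebraMap A F).codRestrict (adjoin ℚ (s : Set F))
    fun a => algebra_adjoin_le_adjoin ℚ _ (hs a))
    fun x y h => IsFractionRing.injective A F (congrArg Subtype.val h)

end UnitGroups

section UnitEquation

universe u

open Polynomial

theorem finite_setOf_isUnit_sub_algebraMap {k B : Type*} [Field k] [CommRing B] [IsDomain B]
    [Algebra k B] [Algebra.FiniteType k B] {x : B} (hx : Transcendental k x) :
    {c : k | IsUnit (x - algebraMap k B c)}.Finite := by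
  let : Algebra k[X] B := (aeval x).toAlgebra
  have : IsScalarTower k k[X] B := .of_algebraMap_eq fun c => (aeval_C x c).symm
  have : FaithfulSMul k[X] B :=
    (faithfulSMul_iff_algebraMap_injective k[X] B).2 (transcendental_iff_injective.1 hx)
  have : Algebra.FiniteType k[X] B := .of_restrictScalars_finiteType k k[X] B
  have : Algebra.FinitePresentation k[X] B := Algebra.FinitePresentation.of_finiteType.1 this
  -- `B` is torsion-free, hence flat, over the principal ideal domain `k[X]`.
  have hopen := PrimeSpectrum.isOpenMap_comap_of_hasGoingDown_of_finitePresentation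
    (R := k[X]) (S := B)
  obtain ⟨_, ⟨f, rfl⟩, hmem, hsub⟩ :=
    PrimeSpectrum.isTopologicalBasis_basic_opens.exists_subset_of_mem_open
      (Set.mem_range_self (Classical.arbitrary (PrimeSpectrum B))) hopen.isOpen_range
  have hf : f ≠ 0 := fun h => hmem (h ▸ zero_mem _)
  refine (finite_setOfPred_isRoot hf).subset fun c hc => ?_
  by_contra hroot
  have hprime : (Ideal.span {X - C c}).IsPrime :=
    (Ideal.span_singleton_prime (X_sub_C_ne_zero c)).2 (prime_X_sub_C c)
  obtain ⟨q, hq⟩ := hsub (show (⟨_, hprime⟩ : PrimeSpectrum k[X]) ∈ _ from fun h =>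
    hroot (dvd_iff_isRoot.1 (Ideal.mem_span_singleton.1 h)))
  have hmemq : aeval x (X - C c) ∈ q.asIdeal :=
    show X - C c ∈ (PrimeSpectrum.comap (algebraMap k[X] B) q).asIdeal from
      hq ▸ Ideal.mem_span_singleton_self _
  rw [map_sub, aeval_X, aeval_C] at hmemq
  exact q.2.ne_top (Ideal.eq_top_of_isUnit_mem _ hmemq hc)

theorem exists_numberField_ringHom_not_isOfFinOrder {A : Type u} [CommRing A] [IsDomain A]
    [CharZero A] [Algebra.FiniteType ℤ A] {x : A} (hx : ¬ IsOfFinOrder x) :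
    ∃ (K : Type u) (_ : Field K) (_ : NumberField K) (φ : A →+* K), ¬ IsOfFinOrder (φ x) := by
  let F := FractionRing A
  have hinj : Function.Injective (algebraMap A F) := IsFractionRing.injective A F
  have : CharZero F := charZero_of_injective_algebraMap hinj
  by_cases hxa : IsIntegral ℚ (algebraMap A F x)
  · obtain ⟨K, _, _, _, φ, hφ⟩ := exists_ringHom_finiteDimensional_of_isIntegral ℚ (algebraMap A F)
    refine ⟨K, inferInstance, .of_module_finite ℚ K, φ, fun hfin => ?_⟩
    obtain ⟨n, hn, hpow⟩ := isOfFinOrder_iff_pow_eq_one.1 hfin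
    refine hx (isOfFinOrder_iff_pow_eq_one.2 ⟨n, hn, sub_eq_zero.1 ?_⟩)
    refine (map_eq_zero_iff _ hinj).1 (hφ _ ?_ ?_)
    · rw [map_sub, map_one, map_pow]
      exact (hxa.pow n).sub isIntegral_one
    · rw [map_sub, map_one, map_pow, hpow, sub_self]
  · obtain ⟨s, hs⟩ := exists_finset_forall_map_mem_adjoin ℚ (algebraMap A F)
    set B := Algebra.adjoin ℚ (s : Set F)
    have : Algebra.FiniteType ℚ B := B.fg_iff_finiteType.1 ⟨s, rfl⟩
    set y : B := (algebraMap A F).codRestrict B hs x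
    have htr : Transcendental ℚ y := fun h => hxa (h.isIntegral.map B.val)
    obtain ⟨c, hc, hcy⟩ :=
      ((Set.Ioi_infinite (1 : ℚ)).sdiff (finite_setOf_isUnit_sub_algebraMap htr)).nonempty
    obtain ⟨K, _, _, _, ψ, hψ⟩ := exists_algHom_finiteDimensional_of_not_isUnit (k := ℚ) hcy
    refine ⟨K, inferInstance, .of_module_finite ℚ K,
      ψ.toRingHom.comp ((algebraMap A F).codRestrict B hs), fun hfin => ?_⟩
    obtain ⟨n, hn, hpow⟩ := isOfFinOrder_iff_pow_eq_one.1 hfin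
    have hyc : ψ y = algebraMap ℚ K c := by
      rwa [map_sub, AlgHom.commutes, sub_eq_zero] at hψ
    have hcn : algebraMap ℚ K (c ^ n) = algebraMap ℚ K 1 := by
      rw [map_pow, ← hyc, map_one]
      exact hpow
    exact (one_lt_pow₀ hc hn.ne').ne' ((algebraMap ℚ K).injective hcn)

theorem finite_of_forall_exists_finite_image {M : Type u} [AddCommGroup M] [IsNoetherian ℤ M]
    {T : Set M} (hT : ∀ y : M, ¬ IsOfFinAddOrder y → ∃ (P : Type u) (_ : AddCommGroup P)
      (f : M →+ P), (f '' T).Finite ∧ ¬ IsOfFinAddOrder (f y)) : T.Finite := by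
  induction hr : Module.finrank ℤ M using Nat.strong_induction_on generalizing M with
  | _ r ih =>
  by_cases htors : ∀ y : M, IsOfFinAddOrder y
  · have : Finite M := Module.finite_of_fg_torsion M fun y => by
      obtain ⟨n, hn, hy⟩ := isOfFinAddOrder_iff_zsmul_eq_zero.1 (htors y)
      exact ⟨⟨n, mem_nonZeroDivisors_of_ne_zero hn⟩, hy⟩
    exact T.toFinite
  push Not at htors
  obtain ⟨y, hy⟩ := htors
  obtain ⟨P, _, f, hfT, hfy⟩ := hT y hy
  have hlt : Module.finrank ℤ f.toIntLinearMap.ker < r := by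
    have hne : Module.finrank ℤ f.toIntLinearMap.range ≠ 0 := by
      rw [Ne, Module.finrank_eq_zero_iff]
      intro h
      obtain ⟨n, hn, hny⟩ := h ⟨f y, y, rfl⟩
      exact hfy (isOfFinAddOrder_iff_zsmul_eq_zero.2 ⟨n, hn, congrArg Subtype.val hny⟩)
    have := f.toIntLinearMap.ker.finrank_quotient_add_finrank
    rw [f.toIntLinearMap.quotKerEquivRange.finrank_eq] at this
    lia
  refine .of_finite_fibers f hfT ?_
  rintro _ ⟨x, _, rfl⟩
  have hcoset : {z : f.toIntLinearMap.ker | x + z.1 ∈ T}.Finite := by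
    refine ih _ hlt (fun z hz => ?_) rfl
    obtain ⟨Q, _, g, hgT, hgz⟩ := hT z.1 fun h => hz
      (isOfFinAddOrder_iff_zsmul_eq_zero.2 <| (isOfFinAddOrder_iff_zsmul_eq_zero.1 h).imp
        fun n hn => ⟨hn.1, Subtype.ext hn.2⟩)
    refine ⟨Q, _, g.comp f.toIntLinearMap.ker.subtype.toAddMonoidHom, ?_, hgz⟩
    refine (hgT.image (· - g x)).subset ?_
    rintro _ ⟨z, hz, rfl⟩
    exact ⟨_, ⟨_, hz, rfl⟩, (congrArg (· - g x) (map_add g x z)).trans (add_sub_cancel_left _ _)⟩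
  refine (hcoset.image fun z => x + z.1).subset fun w ⟨hw, hwx⟩ => ?_
  exact ⟨⟨w - x, (map_sub f w x).trans (sub_eq_zero.2 hwx)⟩,
    show x + (w - x) ∈ T by rwa [add_sub_cancel], add_sub_cancel _ _⟩

theorem finite_setOf_isUnit_one_sub (A : Type u) [CommRing A] [IsDomain A] [CharZero A]
    [Algebra.FiniteType ℤ A] : {x : Aˣ | IsUnit (1 - (x : A))}.Finite := by
  have := isNoetherian_units_of_finiteType_int A
  refine finite_of_forall_exists_finite_image (M := Additive Aˣ) fun y hy => ?_
  have hy' : ¬ IsOfFinOrder (y.toMul : A) := fun h => hy (Units.isOfFinOrder_val.1 h)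
  obtain ⟨K, _, _, φ, hφ⟩ := exists_numberField_ringHom_not_isOfFinOrder hy'
  refine ⟨Additive Kˣ, inferInstance, (Units.map φ.toMonoidHom).toAdditive, ?_,
    fun h => hφ (Units.isOfFinOrder_val.2 h)⟩
  refine .of_finite_image ((finite_image_unitEquation φ).subset ?_)
    (f := fun v : Additive Kˣ => (v.toMul : K)) fun v _ w _ h => Units.ext h
  rintro _ ⟨_, ⟨u, hu, rfl⟩, rfl⟩
  exact ⟨u, hu, rfl⟩

end UnitEquation

section Divisors

variable {A : Type*} [CommRing A]

theorem mem_associatedPrimes_quotient_span_singleton_iff [IsNoetherianRing A] {e : A}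
    {p : Ideal A} :
    p ∈ associatedPrimes A (A ⧸ Ideal.span {e}) ↔
      p.IsPrime ∧ ∃ a : A, ∀ s, s ∈ p ↔ e ∣ s * a := by
  have hcolon (a s : A) : s ∈ (⊥ : Submodule A (A ⧸ Ideal.span {e})).colon
      {Ideal.Quotient.mk (Ideal.span {e}) a} ↔ e ∣ s * a := by
    rw [Submodule.mem_colon_singleton, Submodule.mem_bot, ← Ideal.mem_span_singleton,
      ← Ideal.Quotient.eq_zero_iff_mem, map_mul]
    rfl
  rw [AssociatedPrimes.mem_iff, isAssociatedPrime_iff]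
  refine and_congr_right fun _ => ⟨?_, ?_⟩
  · rintro ⟨x, rfl⟩
    obtain ⟨a, rfl⟩ := Ideal.Quotient.mk_surjective x
    exact ⟨a, hcolon a⟩
  · rintro ⟨a, ha⟩
    exact ⟨Ideal.Quotient.mk _ a, Ideal.ext fun s => (ha s).trans (hcolon a s).symm⟩

variable [IsDomain A]

theorem exists_mem_mul_eq_mul_notMem [IsIntegrallyClosed A] [IsNoetherianRing A] {e : A}
    (he : e ≠ 0) {p : Ideal A} [hp : p.IsPrime] {a : A} (ha : ∀ s, s ∈ p ↔ e ∣ s * a) :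
    ∃ π ∈ p, ∃ t ∉ p, π * a = e * t := by
  by_contra! hmem
  have hinj := IsFractionRing.injective A (FractionRing A)
  have he' : algebraMap A (FractionRing A) e ≠ 0 := (map_ne_zero_iff _ hinj).2 he
  -- Otherwise `a / e` maps the finitely generated module `p` to itself, so it is integral.
  have hint : IsIntegral A (algebraMap A (FractionRing A) a / algebraMap A (FractionRing A) e) := by
    refine isIntegral_of_smul_mem_submodule
      (N := Submodule.map (Algebra.linearMap A (FractionRing A)) p) (fun hbot => he' ?_)
      (Submodule.FG.map _ (IsNoetherian.noetherian p)) _ ?_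
    · exact (Submodule.eq_bot_iff _).1 hbot _ ⟨e, (ha e).2 (dvd_mul_right _ _), rfl⟩
    · rintro _ ⟨s, hs, rfl⟩
      obtain ⟨b, hb⟩ := (ha s).1 hs
      refine ⟨b, by_contra fun hbp => hmem s hs b hbp hb, ?_⟩
      rw [Algebra.linearMap_apply, Algebra.linearMap_apply, smul_eq_mul, div_mul_eq_mul_div,
        eq_div_iff he', ← map_mul, ← map_mul, mul_comm a s, hb, mul_comm]
  obtain ⟨z, hz⟩ := IsIntegrallyClosed.isIntegral_iff.1 hint
  refine hp.ne_top ((Ideal.eq_top_iff_one p).2 ((ha 1).2 ⟨z, hinj ?_⟩))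
  rw [one_mul, map_mul, hz, mul_div_cancel₀ _ he']

theorem isPrincipal_maximalIdeal_localization_atPrime [IsIntegrallyClosed A]
    [IsNoetherianRing A] {e : A} (he : e ≠ 0) {p : Ideal A} [p.IsPrime] {a : A}
    (ha : ∀ s, s ∈ p ↔ e ∣ s * a) :
    (IsLocalRing.maximalIdeal (Localization.AtPrime p)).IsPrincipal := by
  obtain ⟨π, hπ, t, ht, hπt⟩ := exists_mem_mul_eq_mul_notMem he ha
  refine ⟨⟨algebraMap A _ π, le_antisymm ?_ ?_⟩⟩
  · rw [← Localization.AtPrime.map_eq_maximalIdeal, Ideal.map_le_iff_le_comap]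
    intro s hs
    obtain ⟨b, hb⟩ := (ha s).1 hs
    have hst : s * t = π * b := mul_left_cancel₀ he (by linear_combination π * hb - s * hπt)
    have hunit : IsUnit (algebraMap A (Localization.AtPrime p) t) :=
      IsLocalization.map_units (Localization.AtPrime p) (⟨t, ht⟩ : p.primeCompl)
    rw [Ideal.mem_comap, Ideal.submodule_span_eq, Ideal.mem_span_singleton,
      ← hunit.dvd_mul_right, ← map_mul, hst, map_mul]
    exact dvd_mul_right _ _
  · rw [Submodule.span_singleton_le_iff_mem, ← Localization.AtPrime.map_eq_maximalIdeal]
    exact Ideal.mem_map_of_mem _ hπ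

theorem finite_setOf_mem_ideal_of_isPrincipal_maximalIdeal [IsNoetherianRing A] [IsLocalRing A]
    (h : (IsLocalRing.maximalIdeal A).IsPrincipal) {e : A} (he : e ≠ 0) :
    {I : Ideal A | e ∈ I}.Finite := by
  obtain ⟨N, hN⟩ := exists_maximalIdeal_pow_eq_of_principal A h (Ideal.span {e})
    (mt Ideal.span_singleton_eq_bot.1 he)
  refine ((Set.finite_Iic N).image (IsLocalRing.maximalIdeal A ^ ·)).subset fun I hI => ?_
  obtain ⟨n, hn⟩ := exists_maximalIdeal_pow_eq_of_principal A h I fun hbot => he (by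
    rwa [Set.mem_ofPred_eq, hbot] at hI)
  rcases le_total n N with hnN | hNn
  · exact ⟨n, hnN, hn.symm⟩
  · refine ⟨N, Set.self_mem_Iic, le_antisymm ?_ (hn.trans_le (Ideal.pow_le_pow_right hNn))⟩
    exact hN.symm.trans_le ((Ideal.span_singleton_le_iff_mem I).2 hI)

theorem dvd_of_forall_algebraMap_localization_dvd [IsNoetherianRing A] {e x y : A} (he : e ≠ 0)
    (hxe : x ∣ e) (h : ∀ p ∈ associatedPrimes A (A ⧸ Ideal.span {e}), ∀ [p.IsPrime],
      algebraMap A (Localization.AtPrime p) x ∣ algebraMap A (Localization.AtPrime p) y) :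
    x ∣ y := by
  by_contra hxy
  have hne : Ideal.Quotient.mk (Ideal.span {x}) y ≠ 0 := fun h0 =>
    hxy (Ideal.mem_span_singleton.1 (Ideal.Quotient.eq_zero_iff_mem.1 h0))
  obtain ⟨p, hpx, hle⟩ := exists_le_isAssociatedPrime_of_isNoetherianRing (R := A) _ hne
  obtain ⟨hp, a, ha⟩ := mem_associatedPrimes_quotient_span_singleton_iff.1 hpx
  obtain ⟨c, rfl⟩ := hxe
  have hpe : p ∈ associatedPrimes A (A ⧸ Ideal.span {x * c}) :=
    mem_associatedPrimes_quotient_span_singleton_iff.2 ⟨hp, a * c, fun s => by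
      rw [ha, ← mul_assoc, mul_dvd_mul_iff_right (right_ne_zero_of_mul he)]⟩
  obtain ⟨z, hz⟩ := h p hpe
  obtain ⟨⟨b, s⟩, hs⟩ := IsLocalization.surj p.primeCompl z
  have hsy : s * y = x * b := by
    apply IsLocalization.injective (Localization.AtPrime p) p.primeCompl_le_nonZeroDivisors
    rw [map_mul, map_mul, hz, ← hs]
    ring
  refine s.2 (hle ?_)
  rw [Submodule.mem_colon_singleton, Submodule.mem_bot]
  change Ideal.Quotient.mk _ (s * y) = 0
  rw [Ideal.Quotient.eq_zero_iff_mem, Ideal.mem_span_singleton, hsy]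
  exact dvd_mul_right _ _

theorem finite_image_span_singleton_setOf_dvd [IsIntegrallyClosed A] [IsNoetherianRing A] {e : A}
    (he : e ≠ 0) : ((fun x => Ideal.span {x}) '' {x | x ∣ e}).Finite := by
  set P := associatedPrimes A (A ⧸ Ideal.span {e})
  have : Finite P := associatedPrimes.finite _ _
  have (p : P) : p.1.IsPrime := p.2.isPrime
  let f (I : Ideal A) (p : P) : Ideal (Localization.AtPrime p.1) := I.map (algebraMap A _)
  have hf (x : A) (p : P) : f (Ideal.span {x}) p = Ideal.span {algebraMap A _ x} := by
    simp only [f, Ideal.map_span, Set.image_singleton]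
  refine Set.Finite.of_finite_image (f := f) (.subset (Set.Finite.pi' (t := fun p : P =>
    {I : Ideal (Localization.AtPrime p.1) | algebraMap A _ e ∈ I}) fun p => ?_) ?_) ?_
  · obtain ⟨_, a, ha⟩ := mem_associatedPrimes_quotient_span_singleton_iff.1 p.2
    refine finite_setOf_mem_ideal_of_isPrincipal_maximalIdeal
      (isPrincipal_maximalIdeal_localization_atPrime he ha) ((map_ne_zero_iff _ ?_).2 he)
    exact IsLocalization.injective _ p.1.primeCompl_le_nonZeroDivisors
  · rintro _ ⟨_, ⟨x, hx, rfl⟩, rfl⟩ p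
    rw [hf]
    exact Ideal.mem_span_singleton.2 (map_dvd _ hx)
  · have hdvd {x y : A} (hx : x ∣ e) (hxy : f (Ideal.span {x}) = f (Ideal.span {y})) : x ∣ y := by
      refine dvd_of_forall_algebraMap_localization_dvd he hx fun p hp _ => ?_
      rw [← Ideal.mem_span_singleton, ← hf x ⟨p, hp⟩, hxy, hf y ⟨p, hp⟩]
      exact Ideal.mem_span_singleton_self _
    rintro _ ⟨x, hx, rfl⟩ _ ⟨y, hy, rfl⟩ hxy
    exact Ideal.span_singleton_eq_span_singleton.2
      (associated_of_dvd_dvd (hdvd hx hxy) (hdvd hy hxy.symm))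

end Divisors

section Equivalence

variable {A K : Type*} [CommRing A] [CommRing K] [Algebra A K]

theorem AEquiv.refl (x : K) : AEquiv A K x x :=
  ⟨1, 0, by simp⟩

theorem AEquiv.symm {x y : K} (h : AEquiv A K x y) : AEquiv A K y x := by
  obtain ⟨u, a, rfl⟩ := h
  have hu : algebraMap A K (↑u⁻¹ : A) * algebraMap A K u = 1 := by
    rw [← map_mul, Units.inv_mul, map_one]
  refine ⟨u⁻¹, -(↑u⁻¹ * a), ?_⟩
  rw [map_neg, map_mul]
  linear_combination (-x) * hu

theorem AEquiv.trans {x y z : K} (hxy : AEquiv A K x y) (hyz : AEquiv A K y z) :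
    AEquiv A K x z := by
  obtain ⟨u, a, rfl⟩ := hxy
  obtain ⟨u', a', rfl⟩ := hyz
  refine ⟨u' * u, u' * a + a', ?_⟩
  rw [Units.val_mul, map_add, map_mul, map_mul]
  ring

variable (A K) in
/-- The setoid on `K` whose classes are the `A`-equivalence classes; its quotient is used to count
classes. -/
def aequivSetoid : Setoid K where
  r := AEquiv A K
  iseqv := ⟨.refl, .symm, .trans⟩

variable {L K : Type*} [Field L] [Field K] [Algebra L K]

theorem LEquiv.symm {x y : K} (h : LEquiv L K x y) : LEquiv L K y x := by
  obtain ⟨u, a, hu, rfl⟩ := h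
  refine ⟨u⁻¹, -(u⁻¹ * a), inv_ne_zero hu, ?_⟩
  have hu' : algebraMap L K u⁻¹ * algebraMap L K u = 1 := by
    rw [← map_mul, inv_mul_cancel₀ hu, map_one]
  rw [map_neg, map_mul]
  linear_combination (-x) * hu'

theorem LEquiv.trans {x y z : K} (hxy : LEquiv L K x y) (hyz : LEquiv L K y z) :
    LEquiv L K x z := by
  obtain ⟨u, a, hu, rfl⟩ := hxy
  obtain ⟨u', a', hu', rfl⟩ := hyz
  refine ⟨u' * u, u' * a + a', mul_ne_zero hu' hu, ?_⟩
  rw [map_add, map_mul, map_mul]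
  ring

end Equivalence

section ConjugateDifferences

open Polynomial

theorem exists_isIntegral_map_sub_map_eq_mul {A K E : Type*} [CommRing A] [CommRing K]
    [Algebra A K] [CommRing E] [Algebra A E] (σ τ : K →ₐ[A] E) {α β : K} (hβ : IsIntegral A β)
    (hα : α ∈ Algebra.adjoin A {β}) :
    ∃ c : E, IsIntegral A c ∧ σ α - τ α = c * (σ β - τ β) := by
  rw [Algebra.adjoin_singleton_eq_range_aeval] at hα
  obtain ⟨f, rfl⟩ := hα
  let ι := (integralClosure A E).val
  let x : integralClosure A E := ⟨σ β, hβ.map σ⟩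
  let y : integralClosure A E := ⟨τ β, hβ.map τ⟩
  obtain ⟨c, hc⟩ := sub_dvd_eval_sub x y (f.map (algebraMap A (integralClosure A E)))
  refine ⟨c, c.2, ?_⟩
  have hcE := congrArg ι hc
  rw [eval_map_algebraMap, eval_map_algebraMap, map_sub, ← aeval_algHom_apply,
    ← aeval_algHom_apply, map_mul, map_sub] at hcE
  exact (congrArg₂ _ (aeval_algHom_apply σ β f).symm (aeval_algHom_apply τ β f).symm).trans
    (hcE.trans (mul_comm _ _))

theorem exists_units_algebraMap_eq {A L E : Type*} [CommRing A]
    [IsIntegrallyClosed A] [Field L] [Algebra A L] [IsFractionRing A L] [Field E] [Algebra L E]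
    [Algebra A E] [IsScalarTower A L E] {x : L} (hx : x ≠ 0)
    (hint : IsIntegral A (algebraMap L E x)) (hinv : IsIntegral A (algebraMap L E x)⁻¹) :
    ∃ u : Aˣ, algebraMap A L u = x := by
  have hinj : Function.Injective (algebraMap L E) := FaithfulSMul.algebraMap_injective L E
  rw [← map_inv₀] at hinv
  obtain ⟨a, ha⟩ := IsIntegrallyClosed.isIntegral_iff.1 ((isIntegral_algebraMap_iff hinj).1 hint)
  obtain ⟨b, hb⟩ := IsIntegrallyClosed.isIntegral_iff.1 ((isIntegral_algebraMap_iff hinj).1 hinv)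
  have hab : a * b = 1 := IsFractionRing.injective A L (by
    rw [map_mul, ha, hb, map_one, mul_inv_cancel₀ hx])
  exact ⟨.mkOfMulEqOne a b hab, ha⟩

theorem aequiv_of_isIntegral {A L K : Type*} [CommRing A] [IsIntegrallyClosed A]
    [Field L] [Algebra A L] [IsFractionRing A L] [Field K] [Algebra L K] [Algebra A K]
    [IsScalarTower A L K] {α β : K} {u : Aˣ} {a : L} (hα : IsIntegral A α) (hβ : IsIntegral A β)
    (h : β = algebraMap A K u * α + algebraMap L K a) : AEquiv A K α β := by
  have ha : IsIntegral A (algebraMap L K a) := by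
    rw [show algebraMap L K a = β - algebraMap A K u * α by rw [h]; ring]
    exact hβ.sub (isIntegral_algebraMap.mul hα)
  obtain ⟨b, rfl⟩ := IsIntegrallyClosed.isIntegral_iff.1
    ((isIntegral_algebraMap_iff (FaithfulSMul.algebraMap_injective L K)).1 ha)
  exact ⟨u, b, by rw [h, ← IsScalarTower.algebraMap_apply]⟩

variable {L K E : Type*} [Field L] [Field K] [Algebra L K] [Field E] [Algebra L E]

theorem map_sub_map_ne_zero {σ τ : K →ₐ[L] E} (hne : σ ≠ τ) {β : K}
    (hβ : Algebra.adjoin L {β} = ⊤) : σ β - τ β ≠ 0 := fun h =>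
  hne (AlgHom.ext_of_adjoin_eq_top hβ fun _ hx => by
    rw [Set.mem_singleton_iff.1 hx]
    exact sub_eq_zero.1 h)

theorem map_sub_map_algebraMap_mul_add (σ τ : K →ₐ[L] E) (u a : L) (x : K) :
    σ (algebraMap L K u * x + algebraMap L K a) - τ (algebraMap L K u * x + algebraMap L K a) =
      algebraMap L E u * (σ x - τ x) := by
  simp only [map_add, map_mul, AlgHom.commutes]
  ring

end ConjugateDifferences

section MonogenicPair

variable {A L K : Type*} [CommRing A] [Field L] [Field K] [Algebra L K] [Algebra A K] {β α : K}

variable (A L) in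
/-- `IsMonogenicPair A L β α` says that `α` and `β` are `A`-inequivalent generators of the same
`A`-order `A[β]` in `K = L(β)`. -/
structure IsMonogenicPair (β α : K) : Prop where
  isIntegral : IsIntegral A β
  adjoin_eq_top : Algebra.adjoin L {β} = ⊤
  adjoin_eq_adjoin : Algebra.adjoin A {α} = Algebra.adjoin A {β}
  not_aequiv : ¬ AEquiv A K α β

theorem TimesMonogenic.exists_isMonogenicPair (hβ : IsIntegral A β)
    (htop : Algebra.adjoin L {β} = ⊤) (h : TimesMonogenic A K 2 (Algebra.adjoin A {β})) :
    ∃ α, IsMonogenicPair A L β α := by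
  obtain ⟨f, hf, hadjoin⟩ := h
  by_cases h0 : AEquiv A K (f 0) β
  · exact ⟨f 1, hβ, htop, hadjoin 1, fun h1 => hf 0 1 (by decide) (h0.trans h1.symm)⟩
  · exact ⟨f 0, hβ, htop, hadjoin 0, h0⟩

namespace IsMonogenicPair

theorem mem_adjoin (h : IsMonogenicPair A L β α) : α ∈ Algebra.adjoin A {β} :=
  h.adjoin_eq_adjoin ▸ Algebra.self_mem_adjoin_singleton A α

theorem isIntegral_right (h : IsMonogenicPair A L β α) : IsIntegral A α :=
  adjoin_le_integralClosure h.isIntegral h.mem_adjoin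

variable [Algebra A L] [IsScalarTower A L K]

theorem adjoin_right_eq_top (h : IsMonogenicPair A L β α) : Algebra.adjoin L {α} = ⊤ := by
  have hle : Algebra.adjoin A {α} ≤ (Algebra.adjoin L {α}).restrictScalars A :=
    Algebra.adjoin_le Algebra.subset_adjoin
  rw [← top_le_iff, ← h.adjoin_eq_top]
  exact Algebra.adjoin_le (Set.singleton_subset_iff.2 (hle (h.adjoin_eq_adjoin ▸
    Algebra.self_mem_adjoin_singleton A β)))

theorem symm (h : IsMonogenicPair A L β α) : IsMonogenicPair A L α β :=
  ⟨h.isIntegral_right, h.adjoin_right_eq_top, h.adjoin_eq_adjoin.symm, fun h' =>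
    h.not_aequiv h'.symm⟩

variable {E : Type*} [Field E] [Algebra L E] [Algebra A E] [IsScalarTower A L E]
  {σ τ : K →ₐ[L] E}

theorem isIntegral_div (h : IsMonogenicPair A L β α) (hne : σ ≠ τ) :
    IsIntegral A ((σ α - τ α) / (σ β - τ β)) := by
  obtain ⟨c, hc, hcα⟩ := exists_isIntegral_map_sub_map_eq_mul (σ.restrictScalars A)
    (τ.restrictScalars A) h.isIntegral h.mem_adjoin
  rwa [show σ α - τ α = c * (σ β - τ β) from hcα,
    mul_div_cancel_right₀ _ (map_sub_map_ne_zero hne h.adjoin_eq_top)]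

theorem ne_algebraMap_mul_add [IsIntegrallyClosed A] [IsFractionRing A L]
    (h : IsMonogenicPair A L β α) (hne : σ ≠ τ) (u a : L) :
    α ≠ algebraMap L K u * β + algebraMap L K a := by
  intro hα
  have hβ0 := map_sub_map_ne_zero hne h.adjoin_eq_top
  have hα0 := map_sub_map_ne_zero hne h.adjoin_right_eq_top
  have hsub : σ α - τ α = algebraMap L E u * (σ β - τ β) := by
    rw [hα, map_sub_map_algebraMap_mul_add]
  have hu : u ≠ 0 := by
    rintro rfl
    exact hα0 (by rw [hsub, map_zero, zero_mul])
  obtain ⟨w, rfl⟩ := exists_units_algebraMap_eq (A := A) (E := E) hu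
    (by simpa only [hsub, mul_div_cancel_right₀ _ hβ0] using h.isIntegral_div hne)
    (by simpa only [hsub, div_mul_cancel_right₀ hβ0] using h.symm.isIntegral_div hne)
  rw [← IsScalarTower.algebraMap_apply] at hα
  exact h.not_aequiv (aequiv_of_isIntegral h.isIntegral h.isIntegral_right hα).symm

end IsMonogenicPair

end MonogenicPair

section ConjugateRatios

variable {A L K E : Type*} [Field L] [Field K] [Algebra L K] [Field E] [Algebra L E]

variable (L E) in
/-- The family of ratios `(σ α - τ α) / (σ α - ρ α)` over all triples of conjugations `K → E`.
It is invariant under `L`-equivalence and, for a generator `α` of `K`, determines the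
`L`-equivalence class. A ratio with `σ = ρ` has the junk value `0`. -/
def conjugateRatios (α : K) (p : (K →ₐ[L] E) × (K →ₐ[L] E) × (K →ₐ[L] E)) : E :=
  (p.1 α - p.2.1 α) / (p.1 α - p.2.2 α)

theorem div_sub_eq_div_sub_of_conjugateRatios_eq {α α' : K} (hα : Algebra.adjoin L {α} = ⊤)
    (hα' : Algebra.adjoin L {α'} = ⊤) (h : conjugateRatios L E α = conjugateRatios L E α')
    {σ τ σ' τ' : K →ₐ[L] E} (hne : σ ≠ τ) (hne' : σ' ≠ τ') :
    (σ α' - τ α') / (σ α - τ α) = (σ' α' - τ' α') / (σ' α - τ' α) := by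
  have hcommon {σ τ ρ : K →ₐ[L] E} (hτ : σ ≠ τ) (hρ : σ ≠ ρ) :
      (σ α' - τ α') / (σ α - τ α) = (σ α' - ρ α') / (σ α - ρ α) := by
    have hratio := congrFun h (σ, τ, ρ)
    rw [conjugateRatios, conjugateRatios, div_eq_div_iff (map_sub_map_ne_zero hρ hα)
      (map_sub_map_ne_zero hρ hα')] at hratio
    rw [div_eq_div_iff (map_sub_map_ne_zero hτ hα) (map_sub_map_ne_zero hρ hα)]
    linear_combination -hratio
  rcases eq_or_ne σ σ' with rfl | hσ
  · exact hcommon hne hne'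
  · calc (σ α' - τ α') / (σ α - τ α)
      _ = (σ α' - σ' α') / (σ α - σ' α) := hcommon hne hσ
      _ = (σ' α' - σ α') / (σ' α - σ α) := by
        rw [← neg_sub (σ' α'), ← neg_sub (σ' α), neg_div_neg_eq]
      _ = (σ' α' - τ' α') / (σ' α - τ' α) := hcommon hσ.symm hne'

theorem mem_range_algebraMap_of_forall_algHom_eq [IsGalois L E] [Nonempty (K →ₐ[L] E)] {x : K}
    (h : ∀ σ τ : K →ₐ[L] E, σ x = τ x) : ∃ b : L, algebraMap L K b = x := by
  let σ := Classical.arbitrary (K →ₐ[L] E)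
  obtain ⟨b, hb⟩ := (InfiniteGalois.mem_range_algebraMap_iff_fixed (k := L) (σ x)).2 fun g =>
    h ((g : E →ₐ[L] E).comp σ) σ
  exact ⟨b, σ.injective ((σ.commutes b).trans hb)⟩

theorem lequiv_of_conjugateRatios_eq [IsGalois L E] {σ τ : K →ₐ[L] E} (hne : σ ≠ τ) {α α' : K}
    (hα : Algebra.adjoin L {α} = ⊤) (hα' : Algebra.adjoin L {α'} = ⊤)
    (h : conjugateRatios L E α = conjugateRatios L E α') : LEquiv L K α α' := by
  have hnonempty : Nonempty (K →ₐ[L] E) := ⟨σ⟩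
  have hconst {σ' τ' : K →ₐ[L] E} (hne' : σ' ≠ τ') :
      (σ' α' - τ' α') / (σ' α - τ' α) = (σ α' - τ α') / (σ α - τ α) :=
    div_sub_eq_div_sub_of_conjugateRatios_eq hα hα' h hne' hne
  obtain ⟨v, hv⟩ : ∃ v : L, algebraMap L E v = (σ α' - τ α') / (σ α - τ α) := by
    refine (InfiniteGalois.mem_range_algebraMap_iff_fixed _).2 fun g => ?_
    have hg := hconst (σ' := (g : E →ₐ[L] E).comp σ) (τ' := (g : E →ₐ[L] E).comp τ)
      fun hcomp => hne (AlgHom.ext fun x => g.injective (DFunLike.congr_fun hcomp x))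
    rw [map_div₀, map_sub, map_sub]
    exact hg
  obtain ⟨b, hb⟩ := mem_range_algebraMap_of_forall_algHom_eq (E := E)
    (x := α' - algebraMap L K v * α) fun σ' τ' => by
      rcases eq_or_ne σ' τ' with rfl | hne'
      · rfl
      · have hsub := hconst hne'
        rw [div_eq_iff (map_sub_map_ne_zero hne' hα), ← hv] at hsub
        simp only [map_sub, map_mul, AlgHom.commutes]
        linear_combination hsub
  refine ⟨v, b, ?_, by rw [hb]; ring⟩
  rintro rfl
  rw [map_zero] at hv
  exact div_ne_zero (map_sub_map_ne_zero hne hα') (map_sub_map_ne_zero hne hα) hv.symm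

theorem conjugateRatios_mem {C : Type*} [CommRing C] [Algebra C E] (R : Subalgebra C E) {α : K}
    (hα : Algebra.adjoin L {α} = ⊤) (hR : ∀ σ τ σ' τ' : K →ₐ[L] E, σ ≠ τ → σ' ≠ τ' →
      (σ α - τ α) / (σ' α - τ' α) ∈ R) (p : (K →ₐ[L] E) × (K →ₐ[L] E) × (K →ₐ[L] E)) :
    conjugateRatios L E α p ∈ insert 0 (insert 1
      ((fun x : Rˣ => ((x : R) : E)) '' {x : Rˣ | IsUnit (1 - (x : R))})) := by
  obtain ⟨σ, τ, ρ⟩ := p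
  simp only [conjugateRatios]
  rcases eq_or_ne σ τ with rfl | hστ
  · exact .inl (by rw [sub_self, zero_div])
  rcases eq_or_ne σ ρ with rfl | hσρ
  · exact .inl (by rw [sub_self, div_zero])
  rcases eq_or_ne τ ρ with rfl | hτρ
  · exact .inr (.inl (div_self (map_sub_map_ne_zero hστ hα)))
  have hστ0 := map_sub_map_ne_zero hστ hα
  have hσρ0 := map_sub_map_ne_zero hσρ hα
  have hτρ0 := map_sub_map_ne_zero hτρ hα
  let x : R := ⟨_, hR σ τ σ ρ hστ hσρ⟩
  let y : R := ⟨_, hR σ ρ σ τ hσρ hστ⟩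
  let z : R := ⟨_, hR σ ρ τ ρ hσρ hτρ⟩
  have hxy : x * y = 1 := Subtype.ext (div_mul_div_cancel₀ hσρ0 |>.trans (div_self hστ0))
  have hxz : (1 - x) * z = 1 := Subtype.ext (by
    change (1 - (σ α - τ α) / (σ α - ρ α)) * ((σ α - ρ α) / (τ α - ρ α)) = 1
    field_simp
    ring)
  exact .inr (.inr ⟨.mkOfMulEqOne x y hxy, .of_mul_eq_one z hxz, rfl⟩)

variable [CommRing A] [Algebra A L] [Algebra A K] [IsScalarTower A L K] [Algebra A E]
  [IsScalarTower A L E]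

theorem IsMonogenicPair.exists_isIntegral_div_eq_mul {β α γ : K} (h : IsMonogenicPair A L β α)
    (hγ : LEquiv L K β γ) {σ τ σ' τ' : K →ₐ[L] E} (hne : σ ≠ τ) (hne' : σ' ≠ τ') :
    ∃ c : E, IsIntegral A c ∧
      (σ α - τ α) / (σ' α - τ' α) = c * ((σ γ - τ γ) / (σ' γ - τ' γ)) := by
  obtain ⟨u, a, hu, rfl⟩ := hγ
  refine ⟨_, (h.isIntegral_div hne).mul (h.symm.isIntegral_div hne'), ?_⟩
  have hu0 : algebraMap L E u ≠ 0 := (map_ne_zero _).2 hu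
  have hβ := map_sub_map_ne_zero hne h.adjoin_eq_top
  have hβ' := map_sub_map_ne_zero hne' h.adjoin_eq_top
  have hα' := map_sub_map_ne_zero hne' h.adjoin_right_eq_top
  rw [map_sub_map_algebraMap_mul_add, map_sub_map_algebraMap_mul_add]
  field_simp

variable (L E) in
theorem finiteType_int_integralClosure [IsDomain A] [IsIntegrallyClosed A] [IsFractionRing A L]
    [CharZero L] [Algebra.FiniteType ℤ A] [FiniteDimensional L E] :
    Algebra.FiniteType ℤ (integralClosure A E) := by
  have : IsNoetherianRing A := Algebra.FiniteType.isNoetherianRing ℤ A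
  have : Module.Finite A (integralClosure A E) := IsIntegralClosure.finite A L E _
  exact .trans (S := A) inferInstance inferInstance

variable (A) in
theorem finite_setOf_conjugateRatios_isMonogenicPair [IsDomain A] [IsIntegrallyClosed A]
    [IsFractionRing A L] [CharZero L] [Algebra.FiniteType ℤ A] [FiniteDimensional L K]
    [FiniteDimensional L E] (γ : K) :
    {p | ∃ β α : K, IsMonogenicPair A L β α ∧ LEquiv L K β γ ∧
      conjugateRatios L E α = p}.Finite := by
  have : CharZero E := charZero_of_injective_algebraMap (algebraMap L E).injective
  have := finiteType_int_integralClosure (A := A) L E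
  -- A finitely generated ring over which all the ratios become solutions of the unit equation.
  let ratio (q : ((K →ₐ[L] E) × (K →ₐ[L] E)) × (K →ₐ[L] E) × (K →ₐ[L] E)) : E :=
    (q.1.1 γ - q.1.2 γ) / (q.2.1 γ - q.2.2 γ)
  let R := Algebra.adjoin (integralClosure A E) (Set.range ratio)
  have : Algebra.FiniteType (integralClosure A E) R :=
    .adjoin_of_finite (Set.finite_range ratio)
  have : Algebra.FiniteType ℤ R := .trans (S := integralClosure A E) inferInstance inferInstance
  refine (Set.Finite.pi' fun _ => ((finite_setOf_isUnit_one_sub R).image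
    fun x : Rˣ => ((x : R) : E)).insert 1 |>.insert 0).subset ?_
  rintro _ ⟨β, α, h, hγ, rfl⟩ p
  refine conjugateRatios_mem R h.adjoin_right_eq_top (fun σ τ σ' τ' hne hne' => ?_) p
  obtain ⟨c, hc, heq⟩ := h.exists_isIntegral_div_eq_mul hγ hne hne'
  rw [heq]
  exact mul_mem (R.algebraMap_mem ⟨c, hc⟩) (Algebra.subset_adjoin ⟨((σ, τ), σ', τ'), rfl⟩)

end ConjugateRatios

section LeadingCoefficients

open Polynomial

theorem leadingCoeff_mul_pow_natDegree_eq_of_comp_eq {L : Type*} [Field L] {F G : L[X]}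
    {u a v b : L} (hu : u ≠ 0) (hv : v ≠ 0) (hG : G.natDegree ≠ 0)
    (h : F.comp (C u * X + C a) = C v * G + C b) :
    F.leadingCoeff * u ^ G.natDegree = v * G.leadingCoeff := by
  have hlin : (C u * X + C a).natDegree = 1 := natDegree_linear hu
  have hdeg : F.natDegree = G.natDegree := by
    have := congrArg natDegree h
    rwa [natDegree_comp, hlin, mul_one, natDegree_add_C, natDegree_C_mul hv] at this
  have hlt : (C b).degree < (C v * G).degree := by
    rw [degree_C_mul hv]
    exact degree_C_le.trans_lt (natDegree_pos_iff_degree_pos.1 (Nat.pos_of_ne_zero hG))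
  calc F.leadingCoeff * u ^ G.natDegree
    _ = (F.comp (C u * X + C a)).leadingCoeff := by
      rw [leadingCoeff_comp (hlin.trans_ne one_ne_zero), leadingCoeff_linear hu, hdeg]
    _ = v * G.leadingCoeff := by
      rw [h, leadingCoeff_add_of_degree_lt' hlt, leadingCoeff_mul, leadingCoeff_C]

variable {A L K : Type*} [Field L] [Field K] [Algebra L K] [FiniteDimensional L K]

theorem natDegree_minpoly_eq_finrank {β : K} (h : Algebra.adjoin L {β} = ⊤) :
    (minpoly L β).natDegree = Module.finrank L K := by
  rw [← Field.primitive_element_iff_minpoly_natDegree_eq]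
  exact (IntermediateField.eq_adjoin_of_eq_algebra_adjoin L {β} ⊤ h.symm).symm

theorem eq_of_aeval_eq_of_natDegree_lt_finrank {β : K} (h : Algebra.adjoin L {β} = ⊤) {P Q : L[X]}
    (hP : P.natDegree < Module.finrank L K) (hQ : Q.natDegree < Module.finrank L K)
    (hPQ : aeval β P = aeval β Q) : P = Q := by
  by_contra hne
  have hdeg := natDegree_le_natDegree (minpoly.degree_le_of_ne_zero L β (sub_ne_zero.2 hne)
    (by rw [map_sub, hPQ, sub_self]))
  rw [natDegree_minpoly_eq_finrank h] at hdeg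
  exact (hdeg.trans (natDegree_sub_le P Q)).not_gt (max_lt hP hQ)

variable [CommRing A] [IsDomain A] [IsIntegrallyClosed A] [Algebra A L] [IsFractionRing A L]
  [Algebra A K] [IsScalarTower A L K]

theorem exists_aeval_eq_natDegree_lt_finrank {β α : K} (hβ : IsIntegral A β)
    (h : Algebra.adjoin L {β} = ⊤) (hα : α ∈ Algebra.adjoin A {β}) :
    ∃ f : A[X], aeval β f = α ∧ f.natDegree < Module.finrank L K := by
  rw [Algebra.adjoin_singleton_eq_range_aeval] at hα
  obtain ⟨f, rfl⟩ := hα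
  refine ⟨f %ₘ minpoly A β, aeval_modByMonic_eq_self_of_root (minpoly.aeval A β), ?_⟩
  rw [← natDegree_minpoly_eq_finrank h, minpoly.isIntegrallyClosed_eq_field_fractions' L hβ,
    (minpoly.monic hβ).natDegree_map]
  exact natDegree_modByMonic_lt _ (minpoly.monic hβ) (minpoly.ne_one A β)

theorem IsMonogenicPair.exists_algebraMap_mul_pow_natDegree_eq {β β' α α' : K}
    (h : IsMonogenicPair A L β α) (h' : IsMonogenicPair A L β' α') {g : A[X]}
    (hg : aeval β' g = α') (hgd : g.natDegree < Module.finrank L K) (hg0 : g.natDegree ≠ 0)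
    {u a v b : L} (hu : u ≠ 0) (hv : v ≠ 0) (hβ : β = algebraMap L K u * β' + algebraMap L K a)
    (hα : α = algebraMap L K v * α' + algebraMap L K b) :
    ∃ c : A, algebraMap A L c * u ^ g.natDegree = v * algebraMap A L g.leadingCoeff := by
  have hinj := IsFractionRing.injective A L
  obtain ⟨f, hf, hfd⟩ :=
    exists_aeval_eq_natDegree_lt_finrank h.isIntegral h.adjoin_eq_top h.mem_adjoin
  have hcomp : (f.map (algebraMap A L)).comp (C u * X + C a) =
      C v * g.map (algebraMap A L) + C b := by
    refine eq_of_aeval_eq_of_natDegree_lt_finrank h'.adjoin_eq_top ?_ ?_ ?_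
    · rwa [natDegree_comp, natDegree_linear hu, mul_one, natDegree_map_eq_of_injective hinj]
    · rwa [natDegree_add_C, natDegree_C_mul hv, natDegree_map_eq_of_injective hinj]
    · simp only [aeval_comp, map_add, map_mul, aeval_C, aeval_X, aeval_map_algebraMap, hg, ← hβ,
        hf, ← hα]
  have hlead := leadingCoeff_mul_pow_natDegree_eq_of_comp_eq hu hv
    (by rwa [natDegree_map_eq_of_injective hinj]) hcomp
  rw [natDegree_map_eq_of_injective hinj, leadingCoeff_map_of_injective hinj,
    leadingCoeff_map_of_injective hinj] at hlead
  exact ⟨_, hlead⟩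

end LeadingCoefficients

section Comparison

open Polynomial

variable {A L K E : Type*} [CommRing A] [IsIntegrallyClosed A] [Field L] [Algebra A L]
  [IsFractionRing A L] [Field K] [Algebra L K] [Algebra A K] [IsScalarTower A L K] [Field E]
  [Algebra L E] [Algebra A E] [IsScalarTower A L E] {β' α' β α : K}
  {σ τ : K →ₐ[L] E}

theorem IsMonogenicPair.exists_units_algebraMap_mul_eq (h : IsMonogenicPair A L β α)
    (h' : IsMonogenicPair A L β' α') (hne : σ ≠ τ) {u a v b : L} (hu : u ≠ 0) (hv : v ≠ 0)
    (hβ : β = algebraMap L K u * β' + algebraMap L K a)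
    (hα : α = algebraMap L K v * α' + algebraMap L K b) :
    ∃ η : Aˣ, algebraMap A L η * u = v := by
  have hu0 : algebraMap L E u ≠ 0 := (_root_.map_ne_zero _).2 hu
  have hv0 : algebraMap L E v ≠ 0 := (_root_.map_ne_zero _).2 hv
  have hβ0 := map_sub_map_ne_zero hne h'.adjoin_eq_top
  have hα0 := map_sub_map_ne_zero hne h'.adjoin_right_eq_top
  have hquot : algebraMap L E (v / u) =
      (σ α - τ α) / (σ β - τ β) * ((σ β' - τ β') / (σ α' - τ α')) := by
    rw [hβ, hα, map_sub_map_algebraMap_mul_add, map_sub_map_algebraMap_mul_add, map_div₀]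
    field_simp
  obtain ⟨η, hη⟩ := exists_units_algebraMap_eq (A := A) (E := E) (div_ne_zero hv hu)
    (hquot ▸ (h.isIntegral_div hne).mul (h'.symm.isIntegral_div hne))
    (by
      rw [hquot, mul_inv, inv_div, inv_div]
      exact (h.symm.isIntegral_div hne).mul (h'.isIntegral_div hne))
  exact ⟨η, by rw [hη, div_mul_cancel₀ v hu]⟩

theorem IsMonogenicPair.two_le_natDegree (h : IsMonogenicPair A L β α) (hne : σ ≠ τ) {g : A[X]}
    (hg : aeval β g = α) : 2 ≤ g.natDegree := by
  by_contra! hlt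
  obtain ⟨x, y, rfl⟩ := exists_eq_X_add_C_of_natDegree_le_one (Nat.le_of_lt_succ hlt)
  refine h.ne_algebraMap_mul_add hne (algebraMap A L x) (algebraMap A L y) ?_
  simp only [← hg, map_add, map_mul, aeval_C, aeval_X, ← IsScalarTower.algebraMap_apply]

variable [IsDomain A]

theorem exists_ne_zero_forall_isIntegral_exists_algebraMap_eq_mul (hβ' : IsIntegral A β')
    (htop : Algebra.adjoin L {β'} = ⊤) (hne : σ ≠ τ) :
    ∃ t : A, t ≠ 0 ∧ ∀ u a : L, IsIntegral A (algebraMap L K u * β' + algebraMap L K a) →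
      ∃ w : A, algebraMap A L w = u * algebraMap A L t := by
  have hsub {x : K} (hx : IsIntegral A x) : IsIntegral A (σ x - τ x) :=
    (hx.map (σ.restrictScalars A)).sub (hx.map (τ.restrictScalars A))
  have : FaithfulSMul A E := .trans A L E
  let θ : integralClosure A E := ⟨σ β' - τ β', hsub hβ'⟩
  have hθ0 : θ ≠ 0 := fun h => map_sub_map_ne_zero hne htop (congrArg Subtype.val h)
  obtain ⟨t, ht, s, hs⟩ := IsAlgebraic.exists_nonzero_dvd
    (integralClosure.isIntegral θ).isAlgebraic (mem_nonZeroDivisors_of_ne_zero hθ0)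
  refine ⟨t, ht, fun u a hint => ?_⟩
  have hut : algebraMap L E (u * algebraMap A L t) =
      (σ (algebraMap L K u * β' + algebraMap L K a) -
        τ (algebraMap L K u * β' + algebraMap L K a)) * s := by
    have hst : algebraMap A E t = (σ β' - τ β') * s := congrArg Subtype.val hs
    rw [map_sub_map_algebraMap_mul_add, map_mul, ← IsScalarTower.algebraMap_apply, hst, mul_assoc]
  refine IsIntegrallyClosed.isIntegral_iff.1 ((isIntegral_algebraMap_iff (B := E)
    (FaithfulSMul.algebraMap_injective L E)).1 ?_)
  rw [hut]
  exact (hsub hint).mul s.2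

theorem IsMonogenicPair.exists_dvd_and_algebraMap_eq_mul [FiniteDimensional L K]
    (h' : IsMonogenicPair A L β' α') (hne : σ ≠ τ) :
    ∃ e t : A, e ≠ 0 ∧ t ≠ 0 ∧ ∀ β α : K, IsMonogenicPair A L β α → LEquiv L K α' α →
      ∀ u a : L, u ≠ 0 → β = algebraMap L K u * β' + algebraMap L K a →
      ∃ w : A, w ∣ e ∧ algebraMap A L w = u * algebraMap A L t := by
  obtain ⟨t, ht, H⟩ :=
    exists_ne_zero_forall_isIntegral_exists_algebraMap_eq_mul h'.isIntegral h'.adjoin_eq_top hne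
  obtain ⟨g, hg, hgd⟩ :=
    exists_aeval_eq_natDegree_lt_finrank h'.isIntegral h'.adjoin_eq_top h'.mem_adjoin
  obtain ⟨k, hk⟩ := Nat.exists_eq_add_of_le' (h'.two_le_natDegree hne hg)
  have hg0 : g ≠ 0 := by
    rintro rfl
    exact absurd hk (by simp)
  refine ⟨g.leadingCoeff * t ^ (k + 1), t,
    mul_ne_zero (leadingCoeff_ne_zero.2 hg0) (pow_ne_zero _ ht), ht, ?_⟩
  rintro β α h ⟨v, b, hv, hα⟩ u a hu hβ
  obtain ⟨w, hw⟩ := H u a (hβ ▸ h.isIntegral)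
  obtain ⟨η, rfl⟩ := h.exists_units_algebraMap_mul_eq h' hne hu hv hβ hα
  obtain ⟨c, hc⟩ :=
    h.exists_algebraMap_mul_pow_natDegree_eq h' hg hgd (by lia) hu hv hβ hα
  have hcu : algebraMap A L c * u ^ (k + 1) =
      algebraMap A L η * algebraMap A L g.leadingCoeff := by
    refine mul_right_cancel₀ hu ?_
    rw [hk] at hc
    linear_combination hc
  have hcw : c * w ^ (k + 1) = η * (g.leadingCoeff * t ^ (k + 1)) := by
    apply IsFractionRing.injective A L
    simp only [map_mul, map_pow, hw, mul_pow]
    linear_combination algebraMap A L t ^ (k + 1) * hcu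
  have hdvd : w ∣ c * w ^ (k + 1) := (dvd_pow_self w k.succ_ne_zero).mul_left c
  exact ⟨w, Units.dvd_mul_left.1 (hcw ▸ hdvd), hw⟩

end Comparison

section FiniteClasses

variable {A L K E : Type*} [CommRing A] [IsIntegrallyClosed A] [Field L] [Algebra A L]
  [IsFractionRing A L] [Field K] [Algebra L K] [Algebra A K] [IsScalarTower A L K] [Field E]
  [Algebra L E] [Algebra A E] [IsScalarTower A L E] {σ τ : K →ₐ[L] E} {β' α' : K}

theorem aequiv_of_associated {t w₁ w₂ : A} (ht : t ≠ 0) (hw : Associated w₁ w₂) {u₁ u₂ a₁ a₂ : L}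
    (h₁ : algebraMap A L w₁ = u₁ * algebraMap A L t)
    (h₂ : algebraMap A L w₂ = u₂ * algebraMap A L t) {β₁ β₂ γ : K}
    (hβ₁ : IsIntegral A β₁) (hβ₂ : IsIntegral A β₂)
    (hγ₁ : β₁ = algebraMap L K u₁ * γ + algebraMap L K a₁)
    (hγ₂ : β₂ = algebraMap L K u₂ * γ + algebraMap L K a₂) : AEquiv A K β₁ β₂ := by
  obtain ⟨η, rfl⟩ := hw
  have ht0 : algebraMap A L t ≠ 0 := (map_ne_zero_iff _ (IsFractionRing.injective A L)).2 ht
  obtain rfl : u₂ = u₁ * algebraMap A L η := mul_right_cancel₀ ht0 (by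
    rw [← h₂, map_mul, h₁]
    ring)
  refine aequiv_of_isIntegral (u := η) (a := a₂ - algebraMap A L η * a₁) hβ₁ hβ₂ ?_
  rw [hγ₁, hγ₂, IsScalarTower.algebraMap_apply A L K]
  simp only [map_sub, map_mul]
  ring

variable [IsDomain A]

theorem finite_aequiv_classes_of_conjugateRatios_eq [IsNoetherianRing A] [FiniteDimensional L K]
    [IsGalois L E] (hne : σ ≠ τ) (h' : IsMonogenicPair A L β' α') :
    (Quotient.mk (aequivSetoid A K) '' {β | ∃ α, IsMonogenicPair A L β α ∧ LEquiv L K β' β ∧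
      conjugateRatios L E α' = conjugateRatios L E α}).Finite := by
  obtain ⟨e, t, he, ht, H⟩ := h'.exists_dvd_and_algebraMap_eq_mul hne
  let fiber (I : Ideal A) : Set K := {β | IsIntegral A β ∧ ∃ (w : A) (u a : L),
    Ideal.span {w} = I ∧ algebraMap A L w = u * algebraMap A L t ∧
      β = algebraMap L K u * β' + algebraMap L K a}
  have hfiber (I : Ideal A) : (Quotient.mk (aequivSetoid A K) '' fiber I).Subsingleton := by
    rintro _ ⟨β₁, ⟨hβ₁, w₁, u₁, a₁, hI₁, hw₁, hu₁⟩, rfl⟩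
      _ ⟨β₂, ⟨hβ₂, w₂, u₂, a₂, rfl, hw₂, hu₂⟩, rfl⟩
    exact Quotient.sound (aequiv_of_associated ht (Ideal.span_singleton_eq_span_singleton.1 hI₁)
      hw₁ hw₂ hβ₁ hβ₂ hu₁ hu₂)
  refine ((finite_image_span_singleton_setOf_dvd he).biUnion fun I _ => (hfiber I).finite).subset ?_
  rintro _ ⟨β, ⟨α, h, ⟨u, a, hu, hβ⟩, hratios⟩, rfl⟩
  have hα := lequiv_of_conjugateRatios_eq hne h'.adjoin_right_eq_top h.adjoin_right_eq_top hratios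
  obtain ⟨w, hwe, hw⟩ := H β α h hα u a hu hβ
  exact Set.mem_biUnion (Set.mem_image_of_mem _ hwe)
    (Set.mem_image_of_mem _ ⟨h.isIntegral, w, u, a, rfl, hw, hβ⟩)

theorem finite_aequiv_classes_isMonogenicPair [CharZero L] [Algebra.FiniteType ℤ A]
    [FiniteDimensional L K] [FiniteDimensional L E] [IsGalois L E] (hne : σ ≠ τ) (γ : K) :
    (Quotient.mk (aequivSetoid A K) ''
      {β | (∃ α, IsMonogenicPair A L β α) ∧ LEquiv L K β γ}).Finite := by
  have : IsNoetherianRing A := Algebra.FiniteType.isNoetherianRing ℤ A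
  refine ((finite_setOf_conjugateRatios_isMonogenicPair A (E := E) γ).biUnion
    (t := fun p => Quotient.mk (aequivSetoid A K) '' {β | ∃ α, IsMonogenicPair A L β α ∧
      LEquiv L K β γ ∧ conjugateRatios L E α = p}) ?_).subset ?_
  · rintro _ ⟨β', α', h', hγ', rfl⟩
    refine (finite_aequiv_classes_of_conjugateRatios_eq hne h').subset (Set.image_mono ?_)
    rintro β ⟨α, h, hγ, hratios⟩
    exact ⟨α, h, hγ'.trans hγ.symm, hratios.symm⟩
  · rintro _ ⟨β, ⟨⟨α, h⟩, hγ⟩, rfl⟩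
    exact Set.mem_biUnion ⟨β, α, h, hγ, rfl⟩ (Set.mem_image_of_mem _ ⟨α, h, hγ, rfl⟩)

end FiniteClasses

theorem exists_isGalois_algHom_ne (L K : Type*) [Field L] [CharZero L] [Field K] [Algebra L K]
    [FiniteDimensional L K] (h : 1 < Module.finrank L K) :
    ∃ (E : IntermediateField L (AlgebraicClosure K)) (σ τ : K →ₐ[L] E),
      FiniteDimensional L E ∧ IsGalois L E ∧ σ ≠ τ := by
  have : Algebra.IsAlgebraic L (AlgebraicClosure K) := .trans L K _
  have : Normal L (AlgebraicClosure K) :=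
    normal_iff.2 fun x => ⟨Algebra.IsIntegral.isIntegral x, IsAlgClosed.splits _⟩
  let E := IntermediateField.normalClosure L K (AlgebraicClosure K)
  have hcard : Fintype.card (K →ₐ[L] E) = Module.finrank L K :=
    AlgHom.card_of_splits _ _ _ fun x => IsNormalClosure.splits (F := L) (K := K) x
  obtain ⟨σ, τ, hne⟩ := Fintype.exists_pair_of_one_lt_card (hcard ▸ h)
  exact ⟨E, σ, τ, inferInstance, inferInstance, hne⟩

/-- Let `A` be an integrally closed domain with quotient field `L` of characteristic 0,
finitely generated over ℤ, `K` a finite extension of `L` of degree at least 3, and `C`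
the `L`-equivalence class in `K` of an element `γ0`. Then the set of `β ∈ A_K ∩ C` with
`L(β) = K` such that the `A`-order `A[β]` is two times monogenic is contained in a
union of at most finitely many `A`-equivalence classes. -/
theorem two_times_monogenic_generators_in_class_in_finitely_many_AEquiv_classes
    (A : Type*) [CommRing A] [IsDomain A] [IsIntegrallyClosed A] [Algebra.FiniteType ℤ A]
    (L : Type*) [Field L] [CharZero L] [Algebra A L] [IsFractionRing A L]
    (K : Type*) [Field K] [Algebra L K] [FiniteDimensional L K]
    [Algebra A K] [IsScalarTower A L K]
    (hd : 3 ≤ Module.finrank L K) (γ0 : K) :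
    ∃ s : Finset K, ∀ β : K, IsIntegral A β → LEquiv L K β γ0 →
      Algebra.adjoin L {β} = ⊤ →
      TimesMonogenic A K 2 (Algebra.adjoin A {β}) →
      ∃ γ ∈ s, AEquiv A K β γ := by
  classical
  obtain ⟨E, σ, τ, _, _, hne⟩ := exists_isGalois_algHom_ne L K (by lia)
  let : Algebra A E := ((algebraMap L E).comp (algebraMap A L)).toAlgebra
  have : IsScalarTower A L E := .of_algebraMap_eq' rfl
  have hfin := finite_aequiv_classes_isMonogenicPair (A := A) hne γ0
  refine ⟨hfin.toFinset.image Quotient.out, fun β hβ hγ htop htwice => ?_⟩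
  refine ⟨_, Finset.mem_image_of_mem _ (hfin.mem_toFinset.2 (Set.mem_image_of_mem _
    ⟨htwice.exists_isMonogenicPair hβ htop, hγ⟩)), ?_⟩
  exact (Quotient.exact (Quotient.out_eq (Quotient.mk (aequivSetoid A K) β))).symm
end
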